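/- arXiv:2012.13596 — 10 statements merged into one kernel-verified Lean document; each statement's English description precedes it below -/
import Mathlib

section
/- Let ξ ∈ ℝ², ψ ∈ ℝ with ψ > 0, and p ∈ ℝ²; set χ := ψ − p·ξ, a² := |p|² + χ² − 1, and assume a² > 0. Let M := a²(I₂ + ξξᵀ) − (p − χξ)(p − χξ)ᵀ be the coefficient matrix of the principal part of the conical Chaplygin potential equation. Then: (i) the algebraic identity (p − χξ)ᵀ(I₂ + ξξᵀ)⁻¹(p − χξ) = |p|² + χ² − ψ²/(1+|ξ|²) holds; (ii) M is positive definite if and only if ψ > √(1+|ξ|²); (iii) M is singular if and only if ψ = √(1+|ξ|²); (iv) M has a negative eigenvalue if and only if ψ < √(1+|ξ|²). -/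
open Real Matrix

theorem aux_nonneg (x y A B C : ℝ) (hdet : 0 ≤ A * C - B ^ 2)
    (hT : 0 < (1 + y ^ 2) * A - 2 * x * y * B + (1 + x ^ 2) * C) : 0 ≤ A := by
  by_contra h
  have hA : A < 0 := not_le.mp h
  have h1 : A * ((1 + y ^ 2) * A - 2 * x * y * B + (1 + x ^ 2) * C) < 0 :=
    mul_neg_of_neg_of_pos hA hT
  have h2 : 0 < A ^ 2 := by nlinarith
  have h3 : 0 ≤ (1 + x ^ 2) * (A * C - B ^ 2) := by positivity
  nlinarith [sq_nonneg (y * A - x * B), sq_nonneg B]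

theorem aux_form_nonneg (A B C u v : ℝ) (hA : 0 ≤ A) (hC : 0 ≤ C)
    (hdet : 0 ≤ A * C - B ^ 2) : 0 ≤ A * u ^ 2 + 2 * B * u * v + C * v ^ 2 := by
  rcases hA.eq_or_lt with h | h
  · subst h
    have hB : B = 0 := by nlinarith [sq_nonneg B]
    subst hB
    have : 0 ≤ C * v ^ 2 := by positivity
    linarith
  · have h1 : 0 ≤ A * (A * u ^ 2 + 2 * B * u * v + C * v ^ 2) := by
      have : 0 ≤ (A * C - B ^ 2) * v ^ 2 := by positivity
      nlinarith [sq_nonneg (A * u + B * v)]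
    exact nonneg_of_mul_nonneg_right h1 h

theorem aux_form_pos (A B C u v : ℝ) (hA : 0 ≤ A)
    (hdet : 0 < A * C - B ^ 2) (huv : u ≠ 0 ∨ v ≠ 0) :
    0 < A * u ^ 2 + 2 * B * u * v + C * v ^ 2 := by
  have hA' : 0 < A := by
    rcases hA.eq_or_lt with h | h
    · subst h
      nlinarith [sq_nonneg B]
    · exact h
  have h1 : 0 < A * (A * u ^ 2 + 2 * B * u * v + C * v ^ 2) := by
    have e : A * (A * u ^ 2 + 2 * B * u * v + C * v ^ 2)
      = (A * u + B * v) ^ 2 + (A * C - B ^ 2) * v ^ 2 := by ring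
    rw [e]
    by_cases hv : v = 0
    · have hu : u ≠ 0 := huv.resolve_right (fun h => h hv)
      subst hv
      have : 0 < (A * u) ^ 2 := by positivity
      simpa using this
    · have : 0 < (A * C - B ^ 2) * v ^ 2 := by positivity
      nlinarith [sq_nonneg (A * u + B * v)]
  exact pos_of_mul_pos_right h1 hA

theorem aux_neg (A B C : ℝ) (hdet : A * C - B ^ 2 < 0) :
    ∃ u v : ℝ, (u ≠ 0 ∨ v ≠ 0) ∧ A * u ^ 2 + 2 * B * u * v + C * v ^ 2 < 0 := by
  rcases lt_trichotomy A 0 with h | h | h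
  · exact ⟨1, 0, Or.inl one_ne_zero, by simpa using h⟩
  · subst h
    have hB : B ≠ 0 := by
      rintro rfl
      simp at hdet
    refine ⟨(-C - 1) / (2 * B), 1, Or.inr one_ne_zero, ?_⟩
    have : 2 * B * ((-C - 1) / (2 * B)) = -C - 1 := by field_simp
    nlinarith
  · refine ⟨-B, A, Or.inr h.ne', ?_⟩
    nlinarith [mul_neg_of_pos_of_neg h hdet]

/-- Type classification of the principal part of the conical Chaplygin potential
equation: with `χ = ψ − p·ξ`, `a² = |p|² + χ² − 1 > 0`, `q = p − χξ`, and
`M = a²(I₂ + ξξᵀ) − qqᵀ`, one has the identity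
`qᵀ(I₂+ξξᵀ)⁻¹q = |p|² + χ² − ψ²/(1+|ξ|²)`, and `M` is positive definite iff
`ψ > √(1+|ξ|²)` (elliptic), singular iff `ψ = √(1+|ξ|²)` (degenerate), and has a
negative eigenvalue iff `ψ < √(1+|ξ|²)` (hyperbolic). -/
theorem chaplygin_principal_part_classification
    (ξ p : Fin 2 → ℝ) (ψ χ a2 : ℝ) (hψ : 0 < ψ)
    (hχ : χ = ψ - (p 0 * ξ 0 + p 1 * ξ 1))
    (ha2def : a2 = (p 0) ^ 2 + (p 1) ^ 2 + χ ^ 2 - 1) (ha2 : 0 < a2)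
    (q : Fin 2 → ℝ) (hq : q = fun i => p i - χ * ξ i)
    (M0 M : Matrix (Fin 2) (Fin 2) ℝ)
    (hM0 : M0 = 1 + Matrix.vecMulVec ξ ξ)
    (hM : M = a2 • M0 - Matrix.vecMulVec q q) :
    (q ⬝ᵥ (M0⁻¹ *ᵥ q)
        = (p 0) ^ 2 + (p 1) ^ 2 + χ ^ 2 - ψ ^ 2 / (1 + (ξ 0) ^ 2 + (ξ 1) ^ 2)) ∧
    (M.PosDef ↔ Real.sqrt (1 + (ξ 0) ^ 2 + (ξ 1) ^ 2) < ψ) ∧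
    (M.det = 0 ↔ ψ = Real.sqrt (1 + (ξ 0) ^ 2 + (ξ 1) ^ 2)) ∧
    ((∃ v : Fin 2 → ℝ, v ≠ 0 ∧ v ⬝ᵥ (M *ᵥ v) < 0) ↔
      ψ < Real.sqrt (1 + (ξ 0) ^ 2 + (ξ 1) ^ 2)) := by
  have hS : 0 < 1 + (ξ 0) ^ 2 + (ξ 1) ^ 2 := by positivity
  have hq0 : q 0 = p 0 - χ * ξ 0 := by rw [hq]
  have hq1 : q 1 = p 1 - χ * ξ 1 := by rw [hq]
  have hadj : (1 + ξ 1 ^ 2) * q 0 ^ 2 - 2 * ξ 0 * ξ 1 * q 0 * q 1 + (1 + ξ 0 ^ 2) * q 1 ^ 2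
      = (1 + ξ 0 ^ 2 + ξ 1 ^ 2) * (p 0 ^ 2 + p 1 ^ 2 + χ ^ 2) - ψ ^ 2 := by
    have : ψ = χ + (p 0 * ξ 0 + p 1 * ξ 1) := by linarith
    rw [hq0, hq1, this]
    ring
  have e00 : M 0 0 = a2 * (1 + ξ 0 ^ 2) - q 0 ^ 2 := by
    simp [hM, hM0, vecMulVec_apply]; ring
  have e01 : M 0 1 = a2 * (ξ 0 * ξ 1) - q 0 * q 1 := by
    simp [hM, hM0, vecMulVec_apply]
  have e10 : M 1 0 = M 0 1 := by
    rw [e01]; simp [hM, hM0, vecMulVec_apply]; ring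
  have e11 : M 1 1 = a2 * (1 + ξ 1 ^ 2) - q 1 ^ 2 := by
    simp [hM, hM0, vecMulVec_apply]; ring
  have hdet' : M 0 0 * M 1 1 - M 0 1 ^ 2 = a2 * (ψ ^ 2 - (1 + ξ 0 ^ 2 + ξ 1 ^ 2)) := by
    rw [e00, e01, e11]
    linear_combination (-a2) * hadj + a2 * (1 + ξ 0 ^ 2 + ξ 1 ^ 2) * ha2def
  have hdet : M.det = M 0 0 * M 1 1 - M 0 1 ^ 2 := by
    rw [det_fin_two, e10]; ring
  have hT' : (1 + ξ 1 ^ 2) * M 0 0 - 2 * ξ 0 * ξ 1 * M 0 1 + (1 + ξ 0 ^ 2) * M 1 1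
      = a2 * (1 + ξ 0 ^ 2 + ξ 1 ^ 2) + (ψ ^ 2 - (1 + ξ 0 ^ 2 + ξ 1 ^ 2)) := by
    rw [e00, e01, e11]
    linear_combination (-1) * hadj + (1 + ξ 0 ^ 2 + ξ 1 ^ 2) * ha2def
  have hform : ∀ v : Fin 2 → ℝ, v ⬝ᵥ (M *ᵥ v)
      = M 0 0 * v 0 ^ 2 + 2 * M 0 1 * v 0 * v 1 + M 1 1 * v 1 ^ 2 := by
    intro v
    simp [dotProduct, mulVec, Fin.sum_univ_two, e10]
    ring
  have hne : ∀ v : Fin 2 → ℝ, v ≠ 0 ↔ (v 0 ≠ 0 ∨ v 1 ≠ 0) := by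
    intro v
    rw [Ne, funext_iff, Fin.forall_fin_two]
    simp only [Pi.zero_apply]
    tauto
  have haD := mul_pos ha2 hS
  have hAC : 0 ≤ ψ ^ 2 - (1 + ξ 0 ^ 2 + ξ 1 ^ 2) →
      0 ≤ M 0 0 * M 1 1 - M 0 1 ^ 2 ∧ 0 ≤ M 0 0 ∧ 0 ≤ M 1 1 := by
    intro h
    have hd : 0 ≤ M 0 0 * M 1 1 - M 0 1 ^ 2 := by
      rw [hdet']; exact mul_nonneg ha2.le h
    exact ⟨hd, aux_nonneg (ξ 0) (ξ 1) _ (M 0 1) (M 1 1) hd (by linarith),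
      aux_nonneg (ξ 1) (ξ 0) _ (M 0 1) (M 0 0) (by linarith) (by linarith)⟩
  refine ⟨?_, ?_, ?_, ?_⟩
  · have d0 : M0.det = 1 + ξ 0 ^ 2 + ξ 1 ^ 2 := by
      rw [det_fin_two]; simp [hM0, vecMulVec_apply]; ring
    have key : q ⬝ᵥ (M0⁻¹ *ᵥ q) = (1 + ξ 0 ^ 2 + ξ 1 ^ 2)⁻¹ *
        ((1 + ξ 1 ^ 2) * q 0 ^ 2 - 2 * ξ 0 * ξ 1 * q 0 * q 1 + (1 + ξ 0 ^ 2) * q 1 ^ 2) := by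
      rw [inv_def, d0, Ring.inverse_eq_inv', adjugate_fin_two]
      simp [dotProduct, mulVec, Fin.sum_univ_two, hM0, vecMulVec_apply]
      ring
    rw [key, hadj]
    field_simp
  · rw [Real.sqrt_lt' hψ]
    constructor
    · intro h
      have := h.det_pos
      rw [hdet, hdet'] at this
      linarith [pos_of_mul_pos_right this ha2.le]
    · intro h
      obtain ⟨-, hA, -⟩ := hAC (by linarith)
      refine PosDef.of_dotProduct_mulVec_pos ?_ ?_
      · ext i j
        fin_cases i <;> fin_cases j <;> simp [e10]
      · intro v hv
        rw [star_trivial, hform]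
        refine aux_form_pos _ _ _ _ _ hA ?_ ((hne v).1 hv)
        rw [hdet']
        exact mul_pos ha2 (by linarith)
  · rw [hdet, hdet', mul_eq_zero, or_iff_right ha2.ne', sub_eq_zero, eq_comm (a := ψ),
      Real.sqrt_eq_iff_eq_sq hS.le hψ.le, eq_comm]
  · rw [Real.lt_sqrt hψ.le]
    constructor
    · rintro ⟨v, -, hv⟩
      by_contra h
      obtain ⟨hd, hA, hC⟩ := hAC (by linarith)
      rw [hform] at hv
      linarith [aux_form_nonneg _ _ _ (v 0) (v 1) hA hC hd]
    · intro h
      obtain ⟨u, v, huv, hneg⟩ := aux_neg (M 0 0) (M 0 1) (M 1 1) (by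
        rw [hdet']; exact mul_neg_of_pos_of_neg ha2 (by linarith))
      refine ⟨![u, v], (hne _).2 (by simpa using huv), ?_⟩
      rw [hform]
      simpa using hneg
end

section
/- Let ξ ∈ ℝ², ψ ∈ ℝ, and p ∈ ℝ² with ψ > √(1+|ξ|²); set χ := ψ − p·ξ and a² := |p|² + χ² − 1. Then a² > 0, and for every μ ∈ [0,1] the symmetric matrix a²(I₂ + ξξᵀ) − μ(p − χξ)(p − χξ)ᵀ is positive definite. In other words, at every point where ψ > √(1+|ξ|²), the equation ℱ(μ,ψ) = 0 is elliptic for every μ ∈ [0,1]. -/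
open Real Matrix

/-- Whenever `ψ > √(1+|ξ|²)`, one has `a² = |p|² + χ² − 1 > 0` and for every
`μ ∈ [0,1]` the principal-part matrix `a²(I₂+ξξᵀ) − μ qqᵀ` (with `q = p − χξ`) of the
equation `ℱ(μ,ψ) = 0` is positive definite, i.e. the equation is elliptic there. -/
theorem Fmu_elliptic_above_sonic
    (ξ p : Fin 2 → ℝ) (ψ χ a2 : ℝ)
    (hψ : Real.sqrt (1 + (ξ 0) ^ 2 + (ξ 1) ^ 2) < ψ)
    (hχ : χ = ψ - (p 0 * ξ 0 + p 1 * ξ 1))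
    (ha2def : a2 = (p 0) ^ 2 + (p 1) ^ 2 + χ ^ 2 - 1)
    (q : Fin 2 → ℝ) (hq : q = fun i => p i - χ * ξ i) :
    0 < a2 ∧
    ∀ μ : ℝ, 0 ≤ μ → μ ≤ 1 →
      (a2 • ((1 : Matrix (Fin 2) (Fin 2) ℝ) + Matrix.vecMulVec ξ ξ)
          - μ • Matrix.vecMulVec q q).PosDef := by
  obtain ⟨x, hx⟩ : ∃ x, x = ξ 0 := ⟨_, rfl⟩
  obtain ⟨y, hy⟩ : ∃ y, y = ξ 1 := ⟨_, rfl⟩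
  obtain ⟨a, ha⟩ : ∃ a, a = p 0 := ⟨_, rfl⟩
  obtain ⟨b, hb⟩ : ∃ b, b = p 1 := ⟨_, rfl⟩
  have hq0 : q 0 = a - χ * x := by rw [hq, ha, hx]
  have hq1 : q 1 = b - χ * y := by rw [hq, hb, hy]
  rw [← hx, ← hy] at hψ hχ
  rw [← ha, ← hb] at hχ ha2def
  have hN : 0 < 1 + x ^ 2 + y ^ 2 := by positivity
  have hψ2 : 1 + x ^ 2 + y ^ 2 < ψ ^ 2 := Real.lt_sq_of_sqrt_lt hψ
  have hψe : ψ = a * x + b * y + χ := by rw [hχ]; ring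
  have hpos : 0 < a2 := by
    have h : (1 + x ^ 2 + y ^ 2) * a2 = (ψ ^ 2 - (1 + x ^ 2 + y ^ 2))
        + ((a * y - b * x) ^ 2 + (a - χ * x) ^ 2 + (b - χ * y) ^ 2) := by
      rw [ha2def, hψe]; ring
    have h2 : 0 < (1 + x ^ 2 + y ^ 2) * a2 := by
      rw [h]
      have : 0 < ψ ^ 2 - (1 + x ^ 2 + y ^ 2) := by linarith
      positivity
    exact (pos_iff_pos_of_mul_pos h2).mp hN
  refine ⟨hpos, fun μ hμ0 hμ1 => ?_⟩
  refine Matrix.PosDef.of_dotProduct_mulVec_pos ?_ ?_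
  · ext i j
    fin_cases i <;> fin_cases j <;> simp [Matrix.vecMulVec_apply, mul_comm]
  · intro v hv
    obtain ⟨u, hu⟩ : ∃ u, u = v 0 := ⟨_, rfl⟩
    obtain ⟨w, hw⟩ : ∃ w, w = v 1 := ⟨_, rfl⟩
    have huw : 0 < u ^ 2 + w ^ 2 := by
      by_contra hcon
      apply hv
      have h0 : u = 0 := by nlinarith [sq_nonneg u, sq_nonneg w]
      have h1 : w = 0 := by nlinarith [sq_nonneg u, sq_nonneg w]
      ext i
      fin_cases i
      · simpa [h0] using hu.symm
      · simpa [h1] using hw.symm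
    have key : 0 < a2 * (u ^ 2 + w ^ 2 + (x * u + y * w) ^ 2)
        - ((a - χ * x) * u + (b - χ * y) * w) ^ 2 := by
      have h : (1 + x ^ 2 + y ^ 2) * (a2 * (u ^ 2 + w ^ 2 + (x * u + y * w) ^ 2)
          - ((a - χ * x) * u + (b - χ * y) * w) ^ 2)
          = (ψ ^ 2 - (1 + x ^ 2 + y ^ 2)) * (u ^ 2 + w ^ 2 + (x * u + y * w) ^ 2)
          + (a * (w + (x * u + y * w) * y) - b * (u + (x * u + y * w) * x)
            + χ * (u * y - w * x)) ^ 2 := by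
        rw [ha2def, hψe]; ring
      have h2 : 0 < (1 + x ^ 2 + y ^ 2) * (a2 * (u ^ 2 + w ^ 2 + (x * u + y * w) ^ 2)
          - ((a - χ * x) * u + (b - χ * y) * w) ^ 2) := by
        rw [h]
        have : 0 < ψ ^ 2 - (1 + x ^ 2 + y ^ 2) := by linarith
        positivity
      exact (pos_iff_pos_of_mul_pos h2).mp hN
    have e : star v ⬝ᵥ ((a2 • ((1 : Matrix (Fin 2) (Fin 2) ℝ) + Matrix.vecMulVec ξ ξ)
          - μ • Matrix.vecMulVec q q) *ᵥ v)
        = (a2 * (u ^ 2 + w ^ 2 + (x * u + y * w) ^ 2)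
        - ((a - χ * x) * u + (b - χ * y) * w) ^ 2)
        + (1 - μ) * ((a - χ * x) * u + (b - χ * y) * w) ^ 2 := by
      simp [dotProduct, Matrix.mulVec, Fin.sum_univ_two, Matrix.vecMulVec_apply, hq0, hq1,
        ← hx, ← hy, ← hu, ← hw]
      ring
    rw [e]
    have : 0 ≤ 1 - μ := by linarith
    positivity
end

section
/- Let U ⊆ ℝ² be an open set, μ ∈ [0,1], ψ ∈ C²(U), and define w(ξ) := ψ(ξ)/√(1+|ξ|²). Then for every ξ ∈ U, ℱ(μ,ψ)(ξ) = 0 if and only if 𝒩_μ w(ξ) = 0; that is, ψ solves the equation ℱ(μ,ψ) = 0 at a point exactly when the normalized function w solves 𝒩_μ w = 0 there. -/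
open Real Set

/-- Partial derivative in the first conical coordinate. -/
noncomputable def pd1 (f : ℝ × ℝ → ℝ) (x : ℝ × ℝ) : ℝ := fderiv ℝ f x (1, 0)

/-- Partial derivative in the second conical coordinate. -/
noncomputable def pd2 (f : ℝ × ℝ → ℝ) (x : ℝ × ℝ) : ℝ := fderiv ℝ f x (0, 1)

/-- `D²f[a,b] = Σ_{i,j} a_i b_j ∂_{ij} f` evaluated at `x`. -/
noncomputable def D2 (f : ℝ × ℝ → ℝ) (a b x : ℝ × ℝ) : ℝ :=
    a.1 * b.1 * pd1 (pd1 f) x + a.1 * b.2 * pd1 (pd2 f) x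
  + a.2 * b.1 * pd2 (pd1 f) x + a.2 * b.2 * pd2 (pd2 f) x

/-- The gradient `Df` as a vector of `ℝ × ℝ`. -/
noncomputable def gradv (f : ℝ × ℝ → ℝ) (x : ℝ × ℝ) : ℝ × ℝ := (pd1 f x, pd2 f x)

/-- `Df · ξ` at `x = ξ`. -/
noncomputable def dotxi (f : ℝ × ℝ → ℝ) (x : ℝ × ℝ) : ℝ := pd1 f x * x.1 + pd2 f x * x.2

/-- `χ = ψ − Dψ·ξ`. -/
noncomputable def chiF (ψ : ℝ × ℝ → ℝ) (x : ℝ × ℝ) : ℝ := ψ x - dotxi ψ x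

/-- The squared scaled sound speed `a² = |Dψ|² + χ² − 1`. -/
noncomputable def sqSound (ψ : ℝ × ℝ → ℝ) (x : ℝ × ℝ) : ℝ :=
  (pd1 ψ x) ^ 2 + (pd2 ψ x) ^ 2 + (chiF ψ x) ^ 2 - 1

/-- `ℱ(μ,ψ) = a²(Δψ + D²ψ[ξ,ξ]) − μ D²ψ[Dψ − χξ, Dψ − χξ]`;
`μ = 1` is the conical Chaplygin potential equation. -/
noncomputable def Fop (μ : ℝ) (ψ : ℝ × ℝ → ℝ) (x : ℝ × ℝ) : ℝ :=
  sqSound ψ x * (pd1 (pd1 ψ) x + pd2 (pd2 ψ) x + D2 ψ x x x)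
    - μ * D2 ψ (gradv ψ x - chiF ψ x • x) (gradv ψ x - chiF ψ x • x) x

/-- `b²(w) = w² − 1 + (1+|ξ|²)(|Dw|² + (Dw·ξ)²)`. -/
noncomputable def b2 (w : ℝ × ℝ → ℝ) (x : ℝ × ℝ) : ℝ :=
  (w x) ^ 2 - 1
    + (1 + x.1 ^ 2 + x.2 ^ 2) * ((pd1 w x) ^ 2 + (pd2 w x) ^ 2 + (dotxi w x) ^ 2)

/-- The operator `𝒩_μ`. -/
noncomputable def Nop (μ : ℝ) (w : ℝ × ℝ → ℝ) (x : ℝ × ℝ) : ℝ :=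
  b2 w x * (pd1 (pd1 w) x + pd2 (pd2 w) x + D2 w x x x)
    - μ * (1 + x.1 ^ 2 + x.2 ^ 2) *
        D2 w (gradv w x + dotxi w x • x) (gradv w x + dotxi w x • x) x
    + 2 * ((1 - μ) * b2 w x + μ * ((w x) ^ 2 - 1)) * dotxi w x
    + ((2 - μ) * b2 w x + μ * ((w x) ^ 2 - 1)) * w x / (1 + x.1 ^ 2 + x.2 ^ 2)

/-- Local uniform ellipticity of `𝒩_μ` with respect to `w` on `Ω`: on each compact
subset the principal-part matrix `b²(w)(I₂+ξξᵀ) − μ(1+|ξ|²)qqᵀ`, `q = Dw + (Dw·ξ)ξ`,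
has eigenvalues bounded below by a positive constant. -/
def LocUnifElliptic (μ : ℝ) (w : ℝ × ℝ → ℝ) (Ω : Set (ℝ × ℝ)) : Prop :=
  ∀ K : Set (ℝ × ℝ), K ⊆ Ω → IsCompact K → ∃ lam : ℝ, 0 < lam ∧
    ∀ x ∈ K, ∀ v : ℝ × ℝ,
      lam * (v.1 ^ 2 + v.2 ^ 2) ≤
        b2 w x * (v.1 ^ 2 + v.2 ^ 2 + (x.1 * v.1 + x.2 * v.2) ^ 2)
          - μ * (1 + x.1 ^ 2 + x.2 ^ 2) *
              ((pd1 w x + dotxi w x * x.1) * v.1 + (pd2 w x + dotxi w x * x.2) * v.2) ^ 2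

/-- The normalizing factor. -/
noncomputable def sN (x : ℝ × ℝ) : ℝ := Real.sqrt (1 + x.1 ^ 2 + x.2 ^ 2)

lemma sN_pos (x : ℝ × ℝ) : 0 < sN x := Real.sqrt_pos.2 (by positivity)

lemma sN_sq (x : ℝ × ℝ) : sN x ^ 2 = 1 + x.1 ^ 2 + x.2 ^ 2 := Real.sq_sqrt (by positivity)

lemma sN_smooth (x : ℝ × ℝ) : ContDiffAt ℝ 2 sN x := by
  unfold sN
  refine ContDiffAt.sqrt (by fun_prop) ?_
  positivity

lemma sN_diff (x : ℝ × ℝ) : DifferentiableAt ℝ sN x :=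
  (sN_smooth x).differentiableAt (by norm_num)

lemma diff_quot {f : ℝ × ℝ → ℝ} {x : ℝ × ℝ} (hf : DifferentiableAt ℝ f x) :
    DifferentiableAt ℝ (fun y => f y / sN y) x := by
  simp only [div_eq_mul_inv]
  exact hf.fun_mul ((sN_diff x).fun_inv (sN_pos x).ne')

lemma pd1_mul {f g : ℝ × ℝ → ℝ} {x : ℝ × ℝ} (hf : DifferentiableAt ℝ f x)
    (hg : DifferentiableAt ℝ g x) :
    pd1 (fun y => f y * g y) x = f x * pd1 g x + g x * pd1 f x := by
  unfold pd1
  rw [fderiv_fun_mul hf hg]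
  simp

lemma pd1_add {f g : ℝ × ℝ → ℝ} {x : ℝ × ℝ} (hf : DifferentiableAt ℝ f x)
    (hg : DifferentiableAt ℝ g x) :
    pd1 (fun y => f y + g y) x = pd1 f x + pd1 g x := by
  unfold pd1
  rw [fderiv_fun_add hf hg]
  simp

lemma pd1_congr {f g : ℝ × ℝ → ℝ} {x : ℝ × ℝ} (h : f =ᶠ[nhds x] g) : pd1 f x = pd1 g x := by
  unfold pd1
  rw [h.fderiv_eq]

lemma pd1_fst (x : ℝ × ℝ) : pd1 (fun y => y.1) x = 1 := by
  unfold pd1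
  simp [fderiv_fst]

lemma pd1_snd (x : ℝ × ℝ) : pd1 (fun y => y.2) x = 0 := by
  unfold pd1
  simp [fderiv_snd]

lemma pd1_sN (x : ℝ × ℝ) : pd1 sN x = x.1 / sN x := by
  have h := pd1_mul (sN_diff x) (sN_diff x)
  have h2 : (fun y => sN y * sN y) = fun y : ℝ × ℝ => 1 + y.1 ^ 2 + y.2 ^ 2 := by
    funext y
    rw [← sN_sq y]; ring
  have h3 : pd1 (fun y : ℝ × ℝ => 1 + y.1 ^ 2 + y.2 ^ 2) x = 2 * x.1 := by
    have e : (fun y : ℝ × ℝ => 1 + y.1 ^ 2 + y.2 ^ 2)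
        = fun y => (1 + y.1 * y.1) + y.2 * y.2 := by
      funext y; ring
    rw [e, pd1_add (by fun_prop) (by fun_prop), pd1_add (by fun_prop) (by fun_prop),
      pd1_mul (by fun_prop) (by fun_prop), pd1_mul (by fun_prop) (by fun_prop), pd1_fst, pd1_snd]
    simp [pd1]
    try ring
  rw [h2, h3] at h
  have := sN_pos x
  field_simp
  linarith

lemma pd1_quot {f : ℝ × ℝ → ℝ} {x : ℝ × ℝ} (hf : DifferentiableAt ℝ f x) :
    pd1 (fun y => f y / sN y) x = pd1 f x / sN x - f x * x.1 / sN x ^ 3 := by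
  have hq : DifferentiableAt ℝ (fun y => f y / sN y) x := diff_quot hf
  have h := pd1_mul hq (sN_diff x)
  have e : (fun y => f y / sN y * sN y) = f := by
    funext y
    exact div_mul_cancel₀ _ (sN_pos y).ne'
  rw [e, pd1_sN] at h
  rw [h]
  have := sN_pos x
  field_simp
  ring

lemma pd1_smul_sN {w : ℝ × ℝ → ℝ} {x : ℝ × ℝ} (hw : DifferentiableAt ℝ w x) :
    pd1 (fun y => sN y * w y) x = sN x * pd1 w x + w x * (x.1 / sN x) := by
  rw [pd1_mul (sN_diff x) hw, pd1_sN]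

lemma pd1_diff {w : ℝ × ℝ → ℝ} {x : ℝ × ℝ} (hw : ContDiffAt ℝ 2 w x) :
    DifferentiableAt ℝ (pd1 w) x := by
  have h : ContDiffAt ℝ 1 (fderiv ℝ w) x := hw.fderiv_right (by norm_num)
  have h2 : DifferentiableAt ℝ (fderiv ℝ w) x := h.differentiableAt (by norm_num)
  exact h2.clm_apply (differentiableAt_const _)

lemma pd2_mul {f g : ℝ × ℝ → ℝ} {x : ℝ × ℝ} (hf : DifferentiableAt ℝ f x)
    (hg : DifferentiableAt ℝ g x) :
    pd2 (fun y => f y * g y) x = f x * pd2 g x + g x * pd2 f x := by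
  unfold pd2
  rw [fderiv_fun_mul hf hg]
  simp

lemma pd2_add {f g : ℝ × ℝ → ℝ} {x : ℝ × ℝ} (hf : DifferentiableAt ℝ f x)
    (hg : DifferentiableAt ℝ g x) :
    pd2 (fun y => f y + g y) x = pd2 f x + pd2 g x := by
  unfold pd2
  rw [fderiv_fun_add hf hg]
  simp

lemma pd2_congr {f g : ℝ × ℝ → ℝ} {x : ℝ × ℝ} (h : f =ᶠ[nhds x] g) : pd2 f x = pd2 g x := by
  unfold pd2
  rw [h.fderiv_eq]

lemma pd2_fst (x : ℝ × ℝ) : pd2 (fun y => y.1) x = 0 := by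
  unfold pd2
  simp [fderiv_fst]

lemma pd2_snd (x : ℝ × ℝ) : pd2 (fun y => y.2) x = 1 := by
  unfold pd2
  simp [fderiv_snd]

lemma pd2_sN (x : ℝ × ℝ) : pd2 sN x = x.2 / sN x := by
  have h := pd2_mul (sN_diff x) (sN_diff x)
  have h2 : (fun y => sN y * sN y) = fun y : ℝ × ℝ => 1 + y.1 ^ 2 + y.2 ^ 2 := by
    funext y
    rw [← sN_sq y]; ring
  have h3 : pd2 (fun y : ℝ × ℝ => 1 + y.1 ^ 2 + y.2 ^ 2) x = 2 * x.2 := by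
    have e : (fun y : ℝ × ℝ => 1 + y.1 ^ 2 + y.2 ^ 2)
        = fun y => (1 + y.1 * y.1) + y.2 * y.2 := by
      funext y; ring
    rw [e, pd2_add (by fun_prop) (by fun_prop), pd2_add (by fun_prop) (by fun_prop),
      pd2_mul (by fun_prop) (by fun_prop), pd2_mul (by fun_prop) (by fun_prop), pd2_fst, pd2_snd]
    simp [pd2]
    try ring
  rw [h2, h3] at h
  have := sN_pos x
  field_simp
  linarith

lemma pd2_quot {f : ℝ × ℝ → ℝ} {x : ℝ × ℝ} (hf : DifferentiableAt ℝ f x) :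
    pd2 (fun y => f y / sN y) x = pd2 f x / sN x - f x * x.2 / sN x ^ 3 := by
  have hq : DifferentiableAt ℝ (fun y => f y / sN y) x := diff_quot hf
  have h := pd2_mul hq (sN_diff x)
  have e : (fun y => f y / sN y * sN y) = f := by
    funext y
    exact div_mul_cancel₀ _ (sN_pos y).ne'
  rw [e, pd2_sN] at h
  rw [h]
  have := sN_pos x
  field_simp
  ring

lemma pd2_smul_sN {w : ℝ × ℝ → ℝ} {x : ℝ × ℝ} (hw : DifferentiableAt ℝ w x) :
    pd2 (fun y => sN y * w y) x = sN x * pd2 w x + w x * (x.2 / sN x) := by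
  rw [pd2_mul (sN_diff x) hw, pd2_sN]

lemma pd2_diff {w : ℝ × ℝ → ℝ} {x : ℝ × ℝ} (hw : ContDiffAt ℝ 2 w x) :
    DifferentiableAt ℝ (pd2 w) x := by
  have h : ContDiffAt ℝ 1 (fderiv ℝ w) x := hw.fderiv_right (by norm_num)
  have h2 : DifferentiableAt ℝ (fderiv ℝ w) x := h.differentiableAt (by norm_num)
  exact h2.clm_apply (differentiableAt_const _)

lemma pd11_smul_sN {w : ℝ × ℝ → ℝ} {x : ℝ × ℝ} (hw : ContDiffAt ℝ 2 w x) :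
    pd1 (pd1 (fun y => sN y * w y)) x = sN x * pd1 (pd1 w) x + pd1 w x * (x.1 / sN x)
      + w x * (1 / sN x - x.1 * x.1 / sN x ^ 3) + x.1 / sN x * pd1 w x := by
  have hd : DifferentiableAt ℝ w x := hw.differentiableAt (by norm_num)
  have hev : pd1 (fun y => sN y * w y) =ᶠ[nhds x]
      fun y => sN y * pd1 w y + w y * (y.1 / sN y) := by
    filter_upwards [hw.eventually (by simp)] with y hy
    exact pd1_smul_sN (hy.differentiableAt (by norm_num))
  have hc : DifferentiableAt ℝ (fun y : ℝ × ℝ => y.1) x := by fun_prop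
  have hq : DifferentiableAt ℝ (fun y : ℝ × ℝ => y.1 / sN y) x :=
    diff_quot hc
  rw [pd1_congr hev, pd1_add ((sN_diff x).fun_mul (pd1_diff hw)) (hd.fun_mul hq),
    pd1_mul (sN_diff x) (pd1_diff hw), pd1_mul hd hq, pd1_quot hc, pd1_fst, pd1_sN]
  ring

lemma pd12_smul_sN {w : ℝ × ℝ → ℝ} {x : ℝ × ℝ} (hw : ContDiffAt ℝ 2 w x) :
    pd1 (pd2 (fun y => sN y * w y)) x = sN x * pd1 (pd2 w) x + pd2 w x * (x.1 / sN x)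
      + w x * (0 / sN x - x.2 * x.1 / sN x ^ 3) + x.2 / sN x * pd1 w x := by
  have hd : DifferentiableAt ℝ w x := hw.differentiableAt (by norm_num)
  have hev : pd2 (fun y => sN y * w y) =ᶠ[nhds x]
      fun y => sN y * pd2 w y + w y * (y.2 / sN y) := by
    filter_upwards [hw.eventually (by simp)] with y hy
    exact pd2_smul_sN (hy.differentiableAt (by norm_num))
  have hc : DifferentiableAt ℝ (fun y : ℝ × ℝ => y.2) x := by fun_prop
  have hq : DifferentiableAt ℝ (fun y : ℝ × ℝ => y.2 / sN y) x :=
    diff_quot hc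
  rw [pd1_congr hev, pd1_add ((sN_diff x).fun_mul (pd2_diff hw)) (hd.fun_mul hq),
    pd1_mul (sN_diff x) (pd2_diff hw), pd1_mul hd hq, pd1_quot hc, pd1_snd, pd1_sN]
  ring

lemma pd21_smul_sN {w : ℝ × ℝ → ℝ} {x : ℝ × ℝ} (hw : ContDiffAt ℝ 2 w x) :
    pd2 (pd1 (fun y => sN y * w y)) x = sN x * pd2 (pd1 w) x + pd1 w x * (x.2 / sN x)
      + w x * (0 / sN x - x.1 * x.2 / sN x ^ 3) + x.1 / sN x * pd2 w x := by
  have hd : DifferentiableAt ℝ w x := hw.differentiableAt (by norm_num)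
  have hev : pd1 (fun y => sN y * w y) =ᶠ[nhds x]
      fun y => sN y * pd1 w y + w y * (y.1 / sN y) := by
    filter_upwards [hw.eventually (by simp)] with y hy
    exact pd1_smul_sN (hy.differentiableAt (by norm_num))
  have hc : DifferentiableAt ℝ (fun y : ℝ × ℝ => y.1) x := by fun_prop
  have hq : DifferentiableAt ℝ (fun y : ℝ × ℝ => y.1 / sN y) x :=
    diff_quot hc
  rw [pd2_congr hev, pd2_add ((sN_diff x).fun_mul (pd1_diff hw)) (hd.fun_mul hq),
    pd2_mul (sN_diff x) (pd1_diff hw), pd2_mul hd hq, pd2_quot hc, pd2_fst, pd2_sN]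
  ring

lemma pd22_smul_sN {w : ℝ × ℝ → ℝ} {x : ℝ × ℝ} (hw : ContDiffAt ℝ 2 w x) :
    pd2 (pd2 (fun y => sN y * w y)) x = sN x * pd2 (pd2 w) x + pd2 w x * (x.2 / sN x)
      + w x * (1 / sN x - x.2 * x.2 / sN x ^ 3) + x.2 / sN x * pd2 w x := by
  have hd : DifferentiableAt ℝ w x := hw.differentiableAt (by norm_num)
  have hev : pd2 (fun y => sN y * w y) =ᶠ[nhds x]
      fun y => sN y * pd2 w y + w y * (y.2 / sN y) := by
    filter_upwards [hw.eventually (by simp)] with y hy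
    exact pd2_smul_sN (hy.differentiableAt (by norm_num))
  have hc : DifferentiableAt ℝ (fun y : ℝ × ℝ => y.2) x := by fun_prop
  have hq : DifferentiableAt ℝ (fun y : ℝ × ℝ => y.2 / sN y) x :=
    diff_quot hc
  rw [pd2_congr hev, pd2_add ((sN_diff x).fun_mul (pd2_diff hw)) (hd.fun_mul hq),
    pd2_mul (sN_diff x) (pd2_diff hw), pd2_mul hd hq, pd2_quot hc, pd2_snd, pd2_sN]
  ring

lemma Fop_eq (μ : ℝ) {w : ℝ × ℝ → ℝ} {x : ℝ × ℝ} (hw : ContDiffAt ℝ 2 w x) :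
    Fop μ (fun y => sN y * w y) x = sN x * Nop μ w x := by
  have hd : DifferentiableAt ℝ w x := hw.differentiableAt (by norm_num)
  have hs := sN_pos x
  have hN := sN_sq x
  have hchi : chiF (fun y => sN y * w y) x = w x / sN x - sN x * dotxi w x := by
    unfold chiF dotxi
    rw [pd1_smul_sN hd, pd2_smul_sN hd]
    field_simp
    linear_combination (w x) * hN
  have hS : sqSound (fun y => sN y * w y) x = b2 w x := by
    unfold sqSound
    rw [hchi, pd1_smul_sN hd, pd2_smul_sN hd]
    unfold b2 dotxi
    rw [← hN]
    field_simp
    linear_combination (-(w x) ^ 2) * hN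
  have hg : gradv (fun y => sN y * w y) x - chiF (fun y => sN y * w y) x • x
      = sN x • (gradv w x + dotxi w x • x) := by
    rw [hchi]
    unfold gradv
    rw [pd1_smul_sN hd, pd2_smul_sN hd]
    ext <;> simp <;> ring
  have hN0 : (1 + x.1 ^ 2 + x.2 ^ 2 : ℝ) ≠ 0 := by positivity
  have h1 : ∀ t : ℝ, t / sN x = t * sN x / (1 + x.1 ^ 2 + x.2 ^ 2) := by
    intro t
    rw [← hN]
    field_simp
  have h3 : ∀ t : ℝ, t / sN x ^ 3 = t * sN x / (1 + x.1 ^ 2 + x.2 ^ 2) ^ 2 := by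
    intro t
    rw [← hN]
    field_simp
  have hD : ∀ q : ℝ × ℝ, D2 (fun y => sN y * w y) (sN x • q) (sN x • q) x
      = (1 + x.1 ^ 2 + x.2 ^ 2) * D2 (fun y => sN y * w y) q q x := by
    intro q
    rw [← hN]
    unfold D2
    simp only [Prod.smul_fst, Prod.smul_snd, smul_eq_mul]
    ring
  unfold Fop
  rw [hS, hg, hD]
  unfold Nop D2
  rw [pd11_smul_sN hw, pd12_smul_sN hw, pd21_smul_sN hw, pd22_smul_sN hw]
  simp only [h1, h3]
  unfold b2 gradv dotxi
  simp only [Prod.fst_add, Prod.snd_add, Prod.smul_fst, Prod.smul_snd, smul_eq_mul]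
  generalize pd1 (pd1 w) x = A
  generalize pd1 (pd2 w) x = B
  generalize pd2 (pd1 w) x = B'
  generalize pd2 (pd2 w) x = C
  generalize pd1 w x = p
  generalize pd2 w x = q
  generalize w x = v
  generalize sN x = s
  field_simp
  ring

/-- Equivalence of the equations `ℱ(μ,ψ) = 0` and `𝒩_μ w = 0` under the substitution
`w = ψ/√(1+|ξ|²)`: at every point of `U`, `ψ` solves `ℱ(μ,ψ) = 0` exactly when
the normalized function `w` solves `𝒩_μ w = 0`. -/
theorem Fop_eq_zero_iff_Nop_eq_zero
    (U : Set (ℝ × ℝ)) (hU : IsOpen U) (μ : ℝ) (hμ0 : 0 ≤ μ) (hμ1 : μ ≤ 1)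
    (ψ : ℝ × ℝ → ℝ) (hψ : ContDiffOn ℝ 2 ψ U)
    (w : ℝ × ℝ → ℝ)
    (hw : w = fun ξ : ℝ × ℝ => ψ ξ / Real.sqrt (1 + ξ.1 ^ 2 + ξ.2 ^ 2)) :
    ∀ ξ ∈ U, (Fop μ ψ ξ = 0 ↔ Nop μ w ξ = 0) := by
  intro ξ hξ
  have hψx : ContDiffAt ℝ 2 ψ ξ := hψ.contDiffAt (hU.mem_nhds hξ)
  have hwx : ContDiffAt ℝ 2 w ξ := by
    rw [hw]
    exact hψx.div (sN_smooth ξ) (sN_pos ξ).ne'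
  have e : ψ = fun y => sN y * w y := by
    funext y
    rw [hw]
    exact (mul_div_cancel₀ _ (sN_pos y).ne').symm
  rw [e, Fop_eq μ hwx, mul_eq_zero]
  simp [(sN_pos ξ).ne']
end

section
/- For every constant vector η = (η₁, η₂, η₃) ∈ ℝ³ and every μ ∈ [0,1], the function w^η(ξ) := (η₁ξ₁ + η₂ξ₂ + η₃)/√(1 + |ξ|²) satisfies 𝒩_μ w^η(ξ) = 0 at every point ξ ∈ ℝ²; i.e. w^η is an exact global solution of the equation 𝒩_μ w = 0. -/
open Real Set

/-- The function `1/√(1+|ξ|²)`. -/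
noncomputable def gi (x : ℝ × ℝ) : ℝ := (Real.sqrt (1 + x.1 ^ 2 + x.2 ^ 2))⁻¹

lemma gi_sq (x : ℝ × ℝ) : gi x ^ 2 = (1 + x.1 ^ 2 + x.2 ^ 2)⁻¹ := by
  unfold gi
  rw [inv_pow, Real.sq_sqrt (by positivity)]

lemma gi_deriv (x : ℝ × ℝ) : HasFDerivAt gi
    ((-(gi x ^ 3)) • (x.1 • ContinuousLinearMap.fst ℝ ℝ ℝ
      + x.2 • ContinuousLinearMap.snd ℝ ℝ ℝ)) x := by
  have h1 : HasFDerivAt (fun y : ℝ × ℝ => y.1) (ContinuousLinearMap.fst ℝ ℝ ℝ) x :=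
    hasFDerivAt_fst
  have h2 : HasFDerivAt (fun y : ℝ × ℝ => y.2) (ContinuousLinearMap.snd ℝ ℝ ℝ) x :=
    hasFDerivAt_snd
  have hT : (0 : ℝ) < 1 + x.1 ^ 2 + x.2 ^ 2 := by positivity
  have h3 := ((h1.pow 2).const_add 1).add (h2.pow 2)
  have h4 := (((Real.hasDerivAt_sqrt hT.ne').inv
    (Real.sqrt_pos.2 hT).ne').comp_hasFDerivAt x h3)
  refine h4.congr_fderiv ?_
  have hs := Real.sqrt_pos.2 hT
  ext
  all_goals
    simp [gi]
    field_simp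

lemma x1_deriv (x : ℝ × ℝ) :
    HasFDerivAt (fun y : ℝ × ℝ => y.1) (ContinuousLinearMap.fst ℝ ℝ ℝ) x := hasFDerivAt_fst

lemma x2_deriv (x : ℝ × ℝ) :
    HasFDerivAt (fun y : ℝ × ℝ => y.2) (ContinuousLinearMap.snd ℝ ℝ ℝ) x := hasFDerivAt_snd

lemma L_deriv (a b c : ℝ) (x : ℝ × ℝ) :
    HasFDerivAt (fun y : ℝ × ℝ => a * y.1 + b * y.2 + c)
      (a • ContinuousLinearMap.fst ℝ ℝ ℝ + b • ContinuousLinearMap.snd ℝ ℝ ℝ) x :=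
  (((x1_deriv x).const_mul a).add ((x2_deriv x).const_mul b)).add_const c

lemma pd1_w (a b c : ℝ) : pd1 (fun y : ℝ × ℝ => (a * y.1 + b * y.2 + c) * gi y)
    = fun y => a * gi y - (a * y.1 + b * y.2 + c) * y.1 * gi y ^ 3 := by
  funext x
  unfold pd1
  have h := ((L_deriv a b c x).mul (gi_deriv x)).fderiv
  simp only [Pi.mul_def] at h
  rw [h]
  simp
  ring

lemma pd2_w (a b c : ℝ) : pd2 (fun y : ℝ × ℝ => (a * y.1 + b * y.2 + c) * gi y)
    = fun y => b * gi y - (a * y.1 + b * y.2 + c) * y.2 * gi y ^ 3 := by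
  funext x
  unfold pd2
  have h := ((L_deriv a b c x).mul (gi_deriv x)).fderiv
  simp only [Pi.mul_def] at h
  rw [h]
  simp
  ring

lemma pd11 (a b c : ℝ) (x : ℝ × ℝ) :
    pd1 (fun y : ℝ × ℝ => a * gi y - (a * y.1 + b * y.2 + c) * y.1 * gi y ^ 3) x
    = -(2 * a * x.1 + (a * x.1 + b * x.2 + c)) * gi x ^ 3
      + 3 * (a * x.1 + b * x.2 + c) * x.1 ^ 2 * gi x ^ 5 := by
  unfold pd1
  have h := (((gi_deriv x).const_mul a).sub
    (((L_deriv a b c x).mul (x1_deriv x)).mul ((gi_deriv x).pow 3))).fderiv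
  simp only [Pi.mul_def, Pi.sub_def] at h
  rw [h]
  simp
  ring

lemma pd21 (a b c : ℝ) (x : ℝ × ℝ) :
    pd2 (fun y : ℝ × ℝ => a * gi y - (a * y.1 + b * y.2 + c) * y.1 * gi y ^ 3) x
    = -(a * x.2 + b * x.1) * gi x ^ 3
      + 3 * (a * x.1 + b * x.2 + c) * (x.1 * x.2) * gi x ^ 5 := by
  unfold pd2
  have h := (((gi_deriv x).const_mul a).sub
    (((L_deriv a b c x).mul (x1_deriv x)).mul ((gi_deriv x).pow 3))).fderiv
  simp only [Pi.mul_def, Pi.sub_def] at h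
  rw [h]
  simp
  ring

lemma pd12 (a b c : ℝ) (x : ℝ × ℝ) :
    pd1 (fun y : ℝ × ℝ => b * gi y - (a * y.1 + b * y.2 + c) * y.2 * gi y ^ 3) x
    = -(a * x.2 + b * x.1) * gi x ^ 3
      + 3 * (a * x.1 + b * x.2 + c) * (x.1 * x.2) * gi x ^ 5 := by
  unfold pd1
  have h := (((gi_deriv x).const_mul b).sub
    (((L_deriv a b c x).mul (x2_deriv x)).mul ((gi_deriv x).pow 3))).fderiv
  simp only [Pi.mul_def, Pi.sub_def] at h
  rw [h]
  simp
  ring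

lemma pd22 (a b c : ℝ) (x : ℝ × ℝ) :
    pd2 (fun y : ℝ × ℝ => b * gi y - (a * y.1 + b * y.2 + c) * y.2 * gi y ^ 3) x
    = -(2 * b * x.2 + (a * x.1 + b * x.2 + c)) * gi x ^ 3
      + 3 * (a * x.1 + b * x.2 + c) * x.2 ^ 2 * gi x ^ 5 := by
  unfold pd2
  have h := (((gi_deriv x).const_mul b).sub
    (((L_deriv a b c x).mul (x2_deriv x)).mul ((gi_deriv x).pow 3))).fderiv
  simp only [Pi.mul_def, Pi.sub_def] at h
  rw [h]
  simp
  ring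

lemma alg_trace (x y T L g a b : ℝ) (hT : T = 1 + x ^ 2 + y ^ 2) (hu : T ≠ 0) :
    (-(2 * a * x + L) * (g * T⁻¹) + 3 * L * x ^ 2 * (g * T⁻¹ ^ 2))
      + (-(2 * b * y + L) * (g * T⁻¹) + 3 * L * y ^ 2 * (g * T⁻¹ ^ 2))
      + (x * x * (-(2 * a * x + L) * (g * T⁻¹) + 3 * L * x ^ 2 * (g * T⁻¹ ^ 2))
        + x * y * (-(a * y + b * x) * (g * T⁻¹) + 3 * L * (x * y) * (g * T⁻¹ ^ 2))
        + y * x * (-(a * y + b * x) * (g * T⁻¹) + 3 * L * (x * y) * (g * T⁻¹ ^ 2))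
        + y * y * (-(2 * b * y + L) * (g * T⁻¹) + 3 * L * y ^ 2 * (g * T⁻¹ ^ 2)))
      + 2 * ((a * g - L * x * (g * T⁻¹)) * x + (b * g - L * y * (g * T⁻¹)) * y)
      + 2 * (L * g) * T⁻¹ = 0 := by
  field_simp
  subst hT
  ring

lemma alg_quad (x y T L g a b w1 w2 d : ℝ) (hT : T = 1 + x ^ 2 + y ^ 2) (hu : T ≠ 0)
    (h1 : w1 = a * g - L * x * (g * T⁻¹)) (h2 : w2 = b * g - L * y * (g * T⁻¹))
    (hd : d = w1 * x + w2 * y) :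
    ((w1 + d * x) * (w1 + d * x)
          * (-(2 * a * x + L) * (g * T⁻¹) + 3 * L * x ^ 2 * (g * T⁻¹ ^ 2))
        + (w1 + d * x) * (w2 + d * y)
          * (-(a * y + b * x) * (g * T⁻¹) + 3 * L * (x * y) * (g * T⁻¹ ^ 2))
        + (w2 + d * y) * (w1 + d * x)
          * (-(a * y + b * x) * (g * T⁻¹) + 3 * L * (x * y) * (g * T⁻¹ ^ 2))
        + (w2 + d * y) * (w2 + d * y)
          * (-(2 * b * y + L) * (g * T⁻¹) + 3 * L * y ^ 2 * (g * T⁻¹ ^ 2)))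
      + (w1 ^ 2 + w2 ^ 2 + d ^ 2) * (2 * d + L * g * T⁻¹) = 0 := by
  have ha : a * g = w1 + L * x * (g * T⁻¹) := by linarith
  have hb : b * g = w2 + L * y * (g * T⁻¹) := by linarith
  have e11 : -(2 * a * x + L) * (g * T⁻¹) + 3 * L * x ^ 2 * (g * T⁻¹ ^ 2)
      = -2 * x * w1 * T⁻¹ - L * g * T⁻¹ + L * g * x ^ 2 * T⁻¹ ^ 2 := by
    linear_combination (-2 * x * T⁻¹) * ha
  have e12 : -(a * y + b * x) * (g * T⁻¹) + 3 * L * (x * y) * (g * T⁻¹ ^ 2)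
      = -(y * w1 + x * w2) * T⁻¹ + L * g * (x * y) * T⁻¹ ^ 2 := by
    linear_combination (-y * T⁻¹) * ha + (-x * T⁻¹) * hb
  have e22 : -(2 * b * y + L) * (g * T⁻¹) + 3 * L * y ^ 2 * (g * T⁻¹ ^ 2)
      = -2 * y * w2 * T⁻¹ - L * g * T⁻¹ + L * g * y ^ 2 * T⁻¹ ^ 2 := by
    linear_combination (-2 * y * T⁻¹) * hb
  rw [e11, e12, e22]
  clear e11 e12 e22 ha hb h1 h2
  field_simp
  subst hT hd
  ring

/-- For every constant vector `η = (η₁,η₂,η₃) ∈ ℝ³` and every `μ ∈ [0,1]`, the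
function `w^η(ξ) = (η₁ξ₁ + η₂ξ₂ + η₃)/√(1+|ξ|²)` is an exact global solution of
`𝒩_μ w = 0`. -/
theorem weta_solves_Nop (η1 η2 η3 μ : ℝ) (hμ0 : 0 ≤ μ) (hμ1 : μ ≤ 1) :
    ∀ ξ : ℝ × ℝ,
      Nop μ (fun x : ℝ × ℝ =>
        (η1 * x.1 + η2 * x.2 + η3) / Real.sqrt (1 + x.1 ^ 2 + x.2 ^ 2)) ξ = 0 := by
  intro ξ
  have hw : (fun x : ℝ × ℝ =>
        (η1 * x.1 + η2 * x.2 + η3) / Real.sqrt (1 + x.1 ^ 2 + x.2 ^ 2))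
      = fun y => (η1 * y.1 + η2 * y.2 + η3) * gi y := by
    funext x
    rw [div_eq_mul_inv, gi]
  rw [hw]
  unfold Nop b2 D2 gradv dotxi
  rw [pd1_w, pd2_w, pd11, pd12, pd21, pd22]
  have hg := gi_sq ξ
  obtain ⟨x, y⟩ := ξ
  simp only [Prod.fst_add, Prod.snd_add, Prod.smul_fst, Prod.smul_snd, smul_eq_mul] at hg ⊢
  generalize gi (x, y) = g at hg ⊢
  have hT : (0 : ℝ) < 1 + x ^ 2 + y ^ 2 := by positivity
  have h3 : g ^ 3 = g * (1 + x ^ 2 + y ^ 2)⁻¹ := by rw [← hg]; ring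
  have h5 : g ^ 5 = g * ((1 + x ^ 2 + y ^ 2)⁻¹) ^ 2 := by rw [← hg]; ring
  rw [h3, h5]
  generalize hTT : 1 + x ^ 2 + y ^ 2 = T at *
  generalize η1 * x + η2 * y + η3 = L
  have htr := alg_trace x y T L g η1 η2 hTT.symm hT.ne'
  have hq := alg_quad x y T L g η1 η2 _ _ _ hTT.symm hT.ne' rfl rfl rfl
  generalize -(2 * η1 * x + L) * (g * T⁻¹) + 3 * L * x ^ 2 * (g * T⁻¹ ^ 2) = A at *
  generalize -(η1 * y + η2 * x) * (g * T⁻¹) + 3 * L * (x * y) * (g * T⁻¹ ^ 2) = B at *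
  generalize -(2 * η2 * y + L) * (g * T⁻¹) + 3 * L * y ^ 2 * (g * T⁻¹ ^ 2) = C at *
  generalize η1 * g - L * x * (g * T⁻¹) = w1 at *
  generalize η2 * g - L * y * (g * T⁻¹) = w2 at *
  generalize w1 * x + w2 * y = d at *
  generalize L * g = w at *
  linear_combination (w ^ 2 - 1 + T * (w1 ^ 2 + w2 ^ 2 + d ^ 2)) * htr - μ * T * hq
end

section
/- Let Ω_D ⊂ ℝ² be an open bounded domain, and let w₋, w₊ ∈ C⁰(cl(Ω_D)) ∩ C²(Ω_D) satisfy w₋ > 1 and w₊ > 1 in Ω_D, 𝒩₁ w₋ ≥ 0 and 𝒩₁ w₊ ≤ 0 in Ω_D, and w₋ ≤ w₊ on ∂Ω_D. Assume that 𝒩₁ is locally uniformly elliptic with respect to w₊ or with respect to w₋ on Ω_D. Then w₋ ≤ w₊ everywhere in Ω_D. -/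
open Real Set

open Filter Topology in
lemma cp_diff_fderiv {f : ℝ × ℝ → ℝ} {x : ℝ × ℝ} (hf : ContDiffAt ℝ 2 f x) (e : ℝ × ℝ) :
    DifferentiableAt ℝ (fun y => fderiv ℝ f y e) x := by
  have h1 : ContDiffAt ℝ 1 (fderiv ℝ f) x := hf.fderiv_right (by norm_num)
  exact (h1.differentiableAt (by norm_num)).clm_apply (differentiableAt_const e)

open Filter Topology in
lemma cp_ev_diff {f : ℝ × ℝ → ℝ} {x : ℝ × ℝ} (hf : ContDiffAt ℝ 2 f x) :
    ∀ᶠ y in 𝓝 x, DifferentiableAt ℝ f y := by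
  filter_upwards [hf.eventually (by simp)] with y hy
  exact hy.differentiableAt (by norm_num)

open Filter Topology in
lemma cp_cosh1 {w U : ℝ × ℝ → ℝ} {x : ℝ × ℝ} (hw : w =ᶠ[𝓝 x] fun y => cosh (U y))
    (hU : DifferentiableAt ℝ U x) (e : ℝ × ℝ) :
    fderiv ℝ w x e = sinh (U x) * fderiv ℝ U x e := by
  rw [hw.fderiv_eq, (hU.hasFDerivAt.cosh).fderiv]
  simp

open Filter Topology in
lemma cp_cosh2 {w U : ℝ × ℝ → ℝ} {x : ℝ × ℝ} (hw : w =ᶠ[𝓝 x] fun y => cosh (U y))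
    (hU : ContDiffAt ℝ 2 U x) (e d : ℝ × ℝ) :
    fderiv ℝ (fun y => fderiv ℝ w y e) x d =
      cosh (U x) * fderiv ℝ U x d * fderiv ℝ U x e
        + sinh (U x) * fderiv ℝ (fun y => fderiv ℝ U y e) x d := by
  have h1 : (fun y => fderiv ℝ w y e) =ᶠ[𝓝 x] fun y => sinh (U y) * fderiv ℝ U y e := by
    filter_upwards [cp_ev_diff hU, hw.eventuallyEq_nhds] with y hy hwy
    exact cp_cosh1 hwy hy e
  have hd : DifferentiableAt ℝ U x := hU.differentiableAt (by norm_num)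
  rw [h1.fderiv_eq, (hd.hasFDerivAt.sinh.fun_mul (cp_diff_fderiv hU e).hasFDerivAt).fderiv]
  simp
  ring

open Filter Topology in
lemma cp_Nop {w U : ℝ × ℝ → ℝ} {x : ℝ × ℝ} (hw : w =ᶠ[𝓝 x] fun y => cosh (U y))
    (hU : ContDiffAt ℝ 2 U x) (hpos : 0 < U x) :
    Nop 1 w x = sinh (U x) ^ 3 *
      ((pd1 (pd1 U) x + pd2 (pd2 U) x + D2 U x x x)
        + (1 + x.1 ^ 2 + x.2 ^ 2) ^ 2 * D2 U (-pd2 U x, pd1 U x) (-pd2 U x, pd1 U x) x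
        + 2 * dotxi U x
        + 2 * (cosh (U x) / sinh (U x)) *
          ((1 + (1 + x.1 ^ 2 + x.2 ^ 2) * (pd1 U x ^ 2 + pd2 U x ^ 2 + dotxi U x ^ 2))
            / (1 + x.1 ^ 2 + x.2 ^ 2))) := by
  have hd : DifferentiableAt ℝ U x := hU.differentiableAt (by norm_num)
  have e1 : pd1 w x = sinh (U x) * pd1 U x := cp_cosh1 hw hd _
  have e2 : pd2 w x = sinh (U x) * pd2 U x := cp_cosh1 hw hd _
  have e11 : pd1 (pd1 w) x = cosh (U x) * pd1 U x * pd1 U x + sinh (U x) * pd1 (pd1 U) x :=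
    cp_cosh2 hw hU _ _
  have e12 : pd1 (pd2 w) x = cosh (U x) * pd1 U x * pd2 U x + sinh (U x) * pd1 (pd2 U) x :=
    cp_cosh2 hw hU _ _
  have e21 : pd2 (pd1 w) x = cosh (U x) * pd2 U x * pd1 U x + sinh (U x) * pd2 (pd1 U) x :=
    cp_cosh2 hw hU _ _
  have e22 : pd2 (pd2 w) x = cosh (U x) * pd2 U x * pd2 U x + sinh (U x) * pd2 (pd2 U) x :=
    cp_cosh2 hw hU _ _
  have e0 : w x = cosh (U x) := hw.eq_of_nhds
  have hs : sinh (U x) ≠ 0 := (sinh_pos_iff.2 hpos).ne'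
  have hm : (1 + x.1 ^ 2 + x.2 ^ 2) ≠ 0 := by positivity
  have hc : cosh (U x) ^ 2 = sinh (U x) ^ 2 + 1 := cosh_sq _
  have hsq : cosh (U x) ^ 2 - 1 = sinh (U x) ^ 2 := by linarith
  simp only [Nop, b2, D2, gradv, dotxi, Prod.fst_add, Prod.snd_add, Prod.smul_fst, Prod.smul_snd,
    smul_eq_mul, e1, e2, e11, e12, e21, e22, e0, hsq]
  generalize cosh (U x) = C at *
  generalize sinh (U x) = S at *
  field_simp
  ring

open Filter Topology in
lemma cp_second {D : ℝ × ℝ → ℝ} {x : ℝ × ℝ} (hD : ContDiffAt ℝ 2 D x) (hmax : IsLocalMax D x)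
    (v : ℝ × ℝ) : D2 D v v x ≤ 0 := by
  by_contra hcon
  push Not at hcon
  have hline : ∀ t : ℝ, HasDerivAt (fun t : ℝ => x + t • v) v t := by
    intro t
    simpa using ((hasDerivAt_id t).smul_const v).const_add x
  have hcont : Tendsto (fun t : ℝ => x + t • v) (𝓝 0) (𝓝 x) := by
    have := (hline 0).continuousAt.tendsto
    simpa using this
  have hd1 : deriv (fun t : ℝ => D (x + t • v)) =ᶠ[𝓝 0]
      fun t => v.1 * pd1 D (x + t • v) + v.2 * pd2 D (x + t • v) := by
    filter_upwards [hcont.eventually (cp_ev_diff hD)] with t ht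
    have := (ht.hasFDerivAt.comp_hasDerivAt t (hline t)).deriv
    have hv : v = v.1 • ((1, 0) : ℝ × ℝ) + v.2 • ((0, 1) : ℝ × ℝ) := by
      ext <;> simp
    refine this.trans ?_
    conv_lhs => rw [hv]
    rw [map_add, map_smul, map_smul]
    simp [pd1, pd2]
  have hx0 : x + (0 : ℝ) • v = x := by simp
  have hlin : ∀ L : ℝ × ℝ →L[ℝ] ℝ, L v = v.1 * L (1, 0) + v.2 * L (0, 1) := by
    intro L
    have hv : v = v.1 • ((1, 0) : ℝ × ℝ) + v.2 • ((0, 1) : ℝ × ℝ) := by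
      ext <;> simp
    conv_lhs => rw [hv]
    rw [map_add, map_smul, map_smul]
    simp
  have hd2 : deriv (deriv (fun t : ℝ => D (x + t • v))) 0 = D2 D v v x := by
    rw [hd1.deriv_eq]
    have h1 : HasFDerivAt (pd1 D) (fderiv ℝ (pd1 D) x) (x + (0 : ℝ) • v) := by
      rw [hx0]; exact (cp_diff_fderiv hD _).hasFDerivAt
    have h2 : HasFDerivAt (pd2 D) (fderiv ℝ (pd2 D) x) (x + (0 : ℝ) • v) := by
      rw [hx0]; exact (cp_diff_fderiv hD _).hasFDerivAt
    have h1' := (h1.comp_hasDerivAt (0 : ℝ) (hline 0)).const_mul v.1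
    have h2' := (h2.comp_hasDerivAt (0 : ℝ) (hline 0)).const_mul v.2
    refine (h1'.add h2').deriv.trans ?_
    rw [hlin (fderiv ℝ (pd1 D) x), hlin (fderiv ℝ (pd2 D) x)]
    simp only [D2]
    rw [show pd1 (pd1 D) x = fderiv ℝ (pd1 D) x (1, 0) from rfl,
      show pd1 (pd2 D) x = fderiv ℝ (pd2 D) x (1, 0) from rfl,
      show pd2 (pd1 D) x = fderiv ℝ (pd1 D) x (0, 1) from rfl,
      show pd2 (pd2 D) x = fderiv ℝ (pd2 D) x (0, 1) from rfl]
    ring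
  have hlmax : IsLocalMax (fun t : ℝ => D (x + t • v)) 0 := by
    have := hcont.eventually hmax
    filter_upwards [this] with t ht
    simpa using ht
  have hlmin : IsLocalMin (fun t : ℝ => D (x + t • v)) 0 := by
    refine isLocalMin_of_deriv_deriv_pos (by rw [hd2]; exact hcon) hlmax.deriv_eq_zero ?_
    have hc : ContinuousAt D (x + (0 : ℝ) • v) := by rw [hx0]; exact hD.continuousAt
    exact ContinuousAt.comp (f := fun t : ℝ => x + t • v) hc (hline 0).continuousAt
  have hconst : (fun t : ℝ => D (x + t • v)) =ᶠ[𝓝 0] fun _ => D x := by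
    filter_upwards [hlmax, hlmin] with t h1 h2
    simp only [hx0] at h1 h2
    exact le_antisymm h1 h2
  have : deriv (deriv (fun t : ℝ => D (x + t • v))) 0 = 0 := by
    rw [hconst.deriv.deriv_eq]
    simp
  rw [hd2] at this
  linarith

open Filter Topology in
lemma cp_sub2 {f g : ℝ × ℝ → ℝ} {x : ℝ × ℝ} (hf : ContDiffAt ℝ 2 f x) (hg : ContDiffAt ℝ 2 g x)
    (e d : ℝ × ℝ) :
    fderiv ℝ (fun y => fderiv ℝ (fun z => f z - g z) y e) x d =
      fderiv ℝ (fun y => fderiv ℝ f y e) x d - fderiv ℝ (fun y => fderiv ℝ g y e) x d := by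
  have h1 : (fun y => fderiv ℝ (fun z => f z - g z) y e) =ᶠ[𝓝 x]
      fun y => fderiv ℝ f y e - fderiv ℝ g y e := by
    filter_upwards [cp_ev_diff hf, cp_ev_diff hg] with y hy hy'
    rw [fderiv_fun_sub hy hy']
    rfl
  rw [h1.fderiv_eq, fderiv_fun_sub (cp_diff_fderiv hf e) (cp_diff_fderiv hg e)]
  rfl

lemma cp_D2_sub {f g : ℝ × ℝ → ℝ} {x : ℝ × ℝ} (hf : ContDiffAt ℝ 2 f x)
    (hg : ContDiffAt ℝ 2 g x) (v : ℝ × ℝ) :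
    D2 (fun z => f z - g z) v v x = D2 f v v x - D2 g v v x := by
  have a11 : pd1 (pd1 (fun z => f z - g z)) x = pd1 (pd1 f) x - pd1 (pd1 g) x :=
    cp_sub2 hf hg _ _
  have a12 : pd1 (pd2 (fun z => f z - g z)) x = pd1 (pd2 f) x - pd1 (pd2 g) x :=
    cp_sub2 hf hg _ _
  have a21 : pd2 (pd1 (fun z => f z - g z)) x = pd2 (pd1 f) x - pd2 (pd1 g) x :=
    cp_sub2 hf hg _ _
  have a22 : pd2 (pd2 (fun z => f z - g z)) x = pd2 (pd2 f) x - pd2 (pd2 g) x :=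
    cp_sub2 hf hg _ _
  simp only [D2, a11, a12, a21, a22]
  ring

open Filter Topology in
/-- No interior positive local maximum of the difference of the transformed functions. -/
lemma cp_no_max {wm wp U V : ℝ × ℝ → ℝ} {x : ℝ × ℝ}
    (hwm : wm =ᶠ[𝓝 x] fun y => cosh (U y)) (hwp : wp =ᶠ[𝓝 x] fun y => cosh (V y))
    (hU : ContDiffAt ℝ 2 U x) (hV : ContDiffAt ℝ 2 V x) (hVpos : 0 < V x) (hlt : V x < U x)
    (hNm : 0 ≤ Nop 1 wm x) (hNp : Nop 1 wp x ≤ 0)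
    (hmax : IsLocalMax (fun z => U z - V z) x) : False := by
  have hUpos : 0 < U x := hVpos.trans hlt
  have hsU : 0 < sinh (U x) := sinh_pos_iff.2 hUpos
  have hsV : 0 < sinh (V x) := sinh_pos_iff.2 hVpos
  rw [cp_Nop hwm hU hUpos] at hNm
  rw [cp_Nop hwp hV hVpos] at hNp
  have hm' := nonneg_of_mul_nonneg_right hNm (by positivity)
  have hp' := nonpos_of_mul_nonpos_right hNp (by positivity)
  have hdU : DifferentiableAt ℝ U x := hU.differentiableAt (by norm_num)
  have hdV : DifferentiableAt ℝ V x := hV.differentiableAt (by norm_num)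
  have hf0 : fderiv ℝ U x = fderiv ℝ V x := by
    have := hmax.fderiv_eq_zero
    rw [fderiv_fun_sub hdU hdV] at this
    exact sub_eq_zero.1 this
  have g1 : pd1 U x = pd1 V x := by simp only [pd1, hf0]
  have g2 : pd2 U x = pd2 V x := by simp only [pd2, hf0]
  have hD : ContDiffAt ℝ 2 (fun z => U z - V z) x := hU.sub hV
  have s : ∀ v, D2 U v v x ≤ D2 V v v x := by
    intro v
    have := cp_second hD hmax v
    rw [cp_D2_sub hU hV] at this
    linarith
  have s1 := s (1, 0)
  have s2 := s (0, 1)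
  have s3 := s x
  have s4 := s (-pd2 V x, pd1 V x)
  have t1 : pd1 (pd1 U) x ≤ pd1 (pd1 V) x := by simpa [D2] using s1
  have t2 : pd2 (pd2 U) x ≤ pd2 (pd2 V) x := by simpa [D2] using s2
  have hdot : dotxi U x = dotxi V x := by simp only [dotxi, g1, g2]
  rw [g1, g2, hdot] at hm'
  have hcoth : cosh (U x) / sinh (U x) < cosh (V x) / sinh (V x) := by
    rw [div_lt_div_iff₀ hsU hsV]
    have : 0 < sinh (U x - V x) := sinh_pos_iff.2 (by linarith)
    rw [sinh_sub] at this
    linarith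
  have hK : 0 < (1 + (1 + x.1 ^ 2 + x.2 ^ 2) * (pd1 V x ^ 2 + pd2 V x ^ 2 + dotxi V x ^ 2))
            / (1 + x.1 ^ 2 + x.2 ^ 2) := by positivity
  have k1 := mul_lt_mul_of_pos_right hcoth hK
  have k2 := mul_le_mul_of_nonneg_left s4 (sq_nonneg (1 + x.1 ^ 2 + x.2 ^ 2))
  linarith

/-- Comparison principle (Lemma 3.1) for the operator `𝒩₁`: if `w₋, w₊` are
continuous on the closure and `C²` inside an open bounded domain, both `> 1`,
`𝒩₁ w₋ ≥ 0 ≥ 𝒩₁ w₊` in the domain, `w₋ ≤ w₊` on the boundary, and `𝒩₁` is locally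
uniformly elliptic with respect to `w₊` or `w₋`, then `w₋ ≤ w₊` in the domain. -/
theorem comparison_principle_N1
    (ΩD : Set (ℝ × ℝ)) (hΩo : IsOpen ΩD) (hΩb : Bornology.IsBounded ΩD)
    (wm wp : ℝ × ℝ → ℝ)
    (hmc : ContinuousOn wm (closure ΩD)) (hpc : ContinuousOn wp (closure ΩD))
    (hm2 : ContDiffOn ℝ 2 wm ΩD) (hp2 : ContDiffOn ℝ 2 wp ΩD)
    (hm1 : ∀ x ∈ ΩD, 1 < wm x) (hp1 : ∀ x ∈ ΩD, 1 < wp x)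
    (hNm : ∀ x ∈ ΩD, 0 ≤ Nop 1 wm x) (hNp : ∀ x ∈ ΩD, Nop 1 wp x ≤ 0)
    (hbd : ∀ x ∈ frontier ΩD, wm x ≤ wp x)
    (hell : LocUnifElliptic 1 wp ΩD ∨ LocUnifElliptic 1 wm ΩD) :
    ∀ x ∈ ΩD, wm x ≤ wp x := by
  intro x hx
  by_contra hcon
  push Not at hcon
  have hge : ∀ w : ℝ × ℝ → ℝ, ContinuousOn w (closure ΩD) → (∀ x ∈ ΩD, 1 < w x) →
      ∀ x ∈ closure ΩD, 1 ≤ w x := by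
    intro w hc h1 y hy
    have h2 : w y ∈ closure (w '' ΩD) :=
      (hc.image_closure) (mem_image_of_mem w hy)
    have h3 : closure (w '' ΩD) ⊆ Ici 1 := by
      refine closure_minimal ?_ isClosed_Ici
      rintro _ ⟨z, hz, rfl⟩
      exact (h1 z hz).le
    exact h3 h2
  have hm1' := hge wm hmc hm1
  have hp1' := hge wp hpc hp1
  have hDc : ContinuousOn (fun z => arcosh (wm z) - arcosh (wp z)) (closure ΩD) :=
    (continuousOn_arcosh.comp hmc hm1').sub (continuousOn_arcosh.comp hpc hp1')
  obtain ⟨x0, hx0, hmax⟩ := hΩb.isCompact_closure.exists_isMaxOn ⟨x, subset_closure hx⟩ hDc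
  have hpos : 0 < arcosh (wm x0) - arcosh (wp x0) := by
    have h1 : arcosh (wm x) - arcosh (wp x) ≤ arcosh (wm x0) - arcosh (wp x0) :=
      hmax (subset_closure hx)
    have h2 : arcosh (wp x) < arcosh (wm x) :=
      (arcosh_lt_arcosh (by linarith [hp1 x hx]) (by linarith [hm1 x hx])).2 hcon
    linarith
  have hx0Ω : x0 ∈ ΩD := by
    by_contra hn
    have hfr : x0 ∈ frontier ΩD := by
      rw [hΩo.frontier_eq]; exact ⟨hx0, hn⟩
    have := (arcosh_le_arcosh (by linarith [hm1' x0 hx0]) (by linarith [hp1' x0 hx0])).2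
      (hbd x0 hfr)
    linarith
  have hnh : ΩD ∈ nhds x0 := hΩo.mem_nhds hx0Ω
  refine cp_no_max (wm := wm) (wp := wp) (U := fun z => arcosh (wm z))
    (V := fun z => arcosh (wp z)) (x := x0) ?_ ?_ ?_ ?_ (arcosh_pos (hp1 x0 hx0Ω))
    (by simpa using hpos) (hNm x0 hx0Ω) (hNp x0 hx0Ω) ?_
  · filter_upwards [hnh] with y hy
    exact (cosh_arcosh (hm1 y hy).le).symm
  · filter_upwards [hnh] with y hy
    exact (cosh_arcosh (hp1 y hy).le).symm
  · exact (contDiffAt_arcosh (hm1 x0 hx0Ω)).comp x0 (hm2.contDiffAt hnh)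
  · exact (contDiffAt_arcosh (hp1 x0 hx0Ω)).comp x0 (hp2.contDiffAt hnh)
  · filter_upwards [hnh] with y hy
    exact hmax (subset_closure hy)
end

section
/- Let Ω_D ⊂ ℝ² be an open, bounded, convex domain. Then there exists a constant C > 0, depending only on Ω_D, such that for every μ ∈ [0,1], every ε ∈ (0,1], and every w ∈ C⁰(cl(Ω_D)) ∩ C²(Ω_D) satisfying 𝒩_μ w = 0 in Ω_D, w > 1 in Ω_D, and w = 1 + ε on ∂Ω_D, one has 1 + ε < w ≤ C throughout Ω_D. -/
open Real Set

lemma second_test_max (g g' : ℝ → ℝ) (g2 : ℝ)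
    (h1 : ∀ᶠ t in nhds (0:ℝ), HasDerivAt g (g' t) t) (h2 : HasDerivAt g' g2 0)
    (hm : IsLocalMax g 0) : g' 0 = 0 ∧ g2 ≤ 0 := by
  have h0 : g' 0 = 0 := hm.hasDerivAt_eq_zero h1.self_of_nhds
  refine ⟨h0, ?_⟩
  by_contra hc
  push Not at hc
  have he : deriv g =ᶠ[nhds 0] g' := h1.mono (fun t ht => ht.deriv)
  have hdd : deriv (deriv g) 0 = g2 := by rw [he.deriv_eq, h2.deriv]
  have hmin : IsLocalMin g 0 :=
    isLocalMin_of_deriv_deriv_pos (by rw [hdd]; exact hc) (by rw [he.self_of_nhds, h0])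
      h1.self_of_nhds.continuousAt
  have hconst : g =ᶠ[nhds 0] fun _ => g 0 := by
    filter_upwards [hm, hmin] with t ht1 ht2
    exact le_antisymm ht1 ht2
  have : deriv (deriv g) 0 = 0 := by
    rw [hconst.deriv.deriv_eq]; simp
  linarith

lemma fderiv_apply_eq (f : ℝ × ℝ → ℝ) (x v : ℝ × ℝ) :
    fderiv ℝ f x v = v.1 * pd1 f x + v.2 * pd2 f x := by
  have hv : v = v.1 • ((1:ℝ), (0:ℝ)) + v.2 • ((0:ℝ), (1:ℝ)) := by
    ext <;> simp
  conv_lhs => rw [hv]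
  rw [map_add, map_smul, map_smul]
  simp [pd1, pd2]

lemma hasDerivAt_line (f : ℝ × ℝ → ℝ) (x v : ℝ × ℝ) (t : ℝ)
    (hf : DifferentiableAt ℝ f (x + t • v)) :
    HasDerivAt (fun t : ℝ => f (x + t • v)) (v.1 * pd1 f (x + t • v) + v.2 * pd2 f (x + t • v)) t := by
  have hl : HasDerivAt (fun t : ℝ => x + t • v) v t := by
    simpa using ((hasDerivAt_id t).smul_const v).const_add x
  rw [← fderiv_apply_eq]
  exact hf.hasFDerivAt.comp_hasDerivAt t hl

lemma line_derivs (w : ℝ × ℝ → ℝ) (Ω : Set (ℝ × ℝ)) (ho : IsOpen Ω) (hw : ContDiffOn ℝ 2 w Ω)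
    (x : ℝ × ℝ) (hx : x ∈ Ω) (v : ℝ × ℝ) :
    (∀ᶠ t in nhds (0:ℝ), HasDerivAt (fun t : ℝ => w (x + t • v))
      (v.1 * pd1 w (x + t • v) + v.2 * pd2 w (x + t • v)) t) ∧
    HasDerivAt (fun t : ℝ => v.1 * pd1 w (x + t • v) + v.2 * pd2 w (x + t • v)) (D2 w v v x) 0 := by
  constructor
  · have hc : ContinuousAt (fun t : ℝ => x + t • v) 0 := by fun_prop
    have hn : Ω ∈ nhds ((fun t : ℝ => x + t • v) 0) := by simpa using ho.mem_nhds hx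
    filter_upwards [hc hn] with t ht
    exact hasDerivAt_line w x v t
      (((hw _ ht).contDiffAt (ho.mem_nhds ht)).differentiableAt (by norm_num))
  · have hcd : ContDiffAt ℝ 2 w x := (hw _ hx).contDiffAt (ho.mem_nhds hx)
    have hfd : DifferentiableAt ℝ (fderiv ℝ w) x :=
      (hcd.fderiv_right (m := 1) (by norm_num)).differentiableAt (by norm_num)
    have d1 : DifferentiableAt ℝ (pd1 w) (x + (0:ℝ) • v) := by
      simp only [zero_smul, add_zero]
      exact hfd.clm_apply (differentiableAt_const _)
    have d2 : DifferentiableAt ℝ (pd2 w) (x + (0:ℝ) • v) := by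
      simp only [zero_smul, add_zero]
      exact hfd.clm_apply (differentiableAt_const _)
    have := ((hasDerivAt_line (pd1 w) x v 0 d1).const_mul v.1).add
      ((hasDerivAt_line (pd2 w) x v 0 d2).const_mul v.2)
    refine this.congr_deriv ?_
    simp only [zero_smul, add_zero, D2]
    ring

lemma min_test (w : ℝ × ℝ → ℝ) (Ω : Set (ℝ × ℝ)) (ho : IsOpen Ω) (hw : ContDiffOn ℝ 2 w Ω)
    (x : ℝ × ℝ) (hx : x ∈ Ω) (hm : ∀ y ∈ Ω, w x ≤ w y) (v : ℝ × ℝ) :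
    v.1 * pd1 w x + v.2 * pd2 w x = 0 ∧ 0 ≤ D2 w v v x := by
  obtain ⟨h1, h2⟩ := line_derivs w Ω ho hw x hx v
  have hc : ContinuousAt (fun t : ℝ => x + t • v) 0 := by fun_prop
  have hn : Ω ∈ nhds ((fun t : ℝ => x + t • v) 0) := by simpa using ho.mem_nhds hx
  have hmax : IsLocalMax (fun t : ℝ => - w (x + t • v)) 0 := by
    filter_upwards [hc hn] with t ht
    have := hm _ ht
    simpa using this
  have := second_test_max _ _ _ (h1.mono fun t ht => ht.neg) h2.neg hmax
  simp only [zero_smul, add_zero, Pi.neg_apply] at this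
  constructor <;> linarith [this.1, this.2]

noncomputable def gaux (w : ℝ × ℝ → ℝ) (x : ℝ × ℝ) : ℝ :=
  w x * √(1 + x.1 ^ 2 + x.2 ^ 2) + (x.1 ^ 2 + x.2 ^ 2)

lemma sqrt_line (x v : ℝ × ℝ) (t : ℝ) :
    HasDerivAt (fun t : ℝ => √(1 + (x + t • v).1 ^ 2 + (x + t • v).2 ^ 2))
      (((x + t • v).1 * v.1 + (x + t • v).2 * v.2) / √(1 + (x + t • v).1 ^ 2 + (x + t • v).2 ^ 2)) t := by
  have ha : HasDerivAt (fun t : ℝ => (x + t • v).1) v.1 t := by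
    simpa using ((hasDerivAt_id t).mul_const v.1).const_add x.1
  have hb : HasDerivAt (fun t : ℝ => (x + t • v).2) v.2 t := by
    simpa using ((hasDerivAt_id t).mul_const v.2).const_add x.2
  have hp : 0 < 1 + (x + t • v).1 ^ 2 + (x + t • v).2 ^ 2 := by positivity
  have := (((ha.pow 2).const_add 1).add (hb.pow 2)).sqrt (by simpa using hp.ne')
  refine this.congr_deriv ?_
  have hs := (Real.sqrt_pos.2 hp).ne'
  simp only [Pi.add_apply, Pi.pow_apply]
  field_simp
  ring

lemma max_test (w : ℝ × ℝ → ℝ) (Ω : Set (ℝ × ℝ)) (ho : IsOpen Ω) (hw : ContDiffOn ℝ 2 w Ω)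
    (x : ℝ × ℝ) (hx : x ∈ Ω) (hm : ∀ y ∈ Ω, gaux w y ≤ gaux w x) (s : ℝ)
    (hs : s = √(1 + x.1 ^ 2 + x.2 ^ 2)) (v : ℝ × ℝ) :
    (v.1 * pd1 w x + v.2 * pd2 w x) * s + w x * ((x.1 * v.1 + x.2 * v.2) / s)
      + 2 * (x.1 * v.1 + x.2 * v.2) = 0 ∧
    D2 w v v x * s + 2 * (v.1 * pd1 w x + v.2 * pd2 w x) * ((x.1 * v.1 + x.2 * v.2) / s)
      + w x * ((v.1 ^ 2 + v.2 ^ 2) / s - (x.1 * v.1 + x.2 * v.2) ^ 2 / s ^ 3)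
      + 2 * (v.1 ^ 2 + v.2 ^ 2) ≤ 0 := by
  obtain ⟨h1, h2⟩ := line_derivs w Ω ho hw x hx v
  have hc : ContinuousAt (fun t : ℝ => x + t • v) 0 := by fun_prop
  have hn : Ω ∈ nhds ((fun t : ℝ => x + t • v) 0) := by simpa using ho.mem_nhds hx
  have hmax : IsLocalMax (fun t : ℝ => gaux w (x + t • v)) 0 := by
    filter_upwards [hc hn] with t ht
    have := hm _ ht
    simpa using this
  have ha (t : ℝ) : HasDerivAt (fun t : ℝ => (x + t • v).1) v.1 t := by
    simpa using ((hasDerivAt_id t).mul_const v.1).const_add x.1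
  have hb (t : ℝ) : HasDerivAt (fun t : ℝ => (x + t • v).2) v.2 t := by
    simpa using ((hasDerivAt_id t).mul_const v.2).const_add x.2
  have hl (t : ℝ) := ((ha t).mul_const v.1).add ((hb t).mul_const v.2)
  have hsp : 0 < s := by rw [hs]; positivity
  have hs0 : √(1 + (x + (0:ℝ) • v).1 ^ 2 + (x + (0:ℝ) • v).2 ^ 2) = s := by simp [hs]
  have hd1 := h1.mono fun t ht => (ht.mul (sqrt_line x v t)).add (((ha t).pow 2).add ((hb t).pow 2))
  have hd2 := ((h2.mul (sqrt_line x v 0)).add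
    (h1.self_of_nhds.mul ((hl 0).div (sqrt_line x v 0) (by rw [hs0]; exact hsp.ne')))).add
    ((hl 0).const_mul 2)
  have key := second_test_max (fun t : ℝ => gaux w (x + t • v)) _ _ hd1
    (hd2.congr_of_eventuallyEq (Filter.Eventually.of_forall fun t => ?_)) hmax
  · simp only [zero_smul, add_zero, Pi.add_apply, Pi.mul_apply, Pi.div_apply, ← hs] at key
    obtain ⟨k1, k2⟩ := key
    constructor
    · rw [← k1]; norm_num; ring
    · refine le_of_eq_of_le ?_ k2
      field_simp
      ring
  · simp only [Pi.add_apply, Pi.mul_apply, Pi.div_apply]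
    norm_num
    ring

lemma ident_aux (μ s k r B c W A Q G Gx : ℝ) (hsp : 0 < s) (hsr : s ^ 2 = 1 + r)
    (hW : W = k * s ^ 2 - 2 * s) (hc : c = B - μ * s ^ 6 * k ^ 2)
    (hG : G = A * s - 3 * k * r / s + 2 * k * s + 2 * r / s ^ 2)
    (hGx : Gx = Q * s - 3 * k * r ^ 2 / s + k * s * r + 2 * r ^ 2 / s ^ 2)
    (hN : B * (A + Q) - μ * s ^ 6 * k ^ 2 * Q - 2 * (B - μ * s ^ 4 * k ^ 2 * r) * k * r
      + (2 * B - μ * s ^ 4 * k ^ 2 * r) * W / s ^ 2 = 0) :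
    B * G + c * Gx = 2 * (2 * B + c * r) := by
  have hr : r = s ^ 2 - 1 := by linarith
  subst hr hW hc hG hGx
  rw [← sub_eq_zero]
  refine Eq.trans ?_ ((congrArg (fun y => s * y) hN).trans (mul_zero s))
  field_simp
  ring

lemma rad_aux (μ s k r B c W : ℝ) (h1 : μ ≤ 1) (hsp : 0 < s) (hr0 : 0 ≤ r) (hsr : s ^ 2 = 1 + r)
    (hw1 : 1 < W) (hB : B = W ^ 2 - 1 + s ^ 4 * k ^ 2 * r)
    (hc : c = B - μ * s ^ 6 * k ^ 2) : 0 < B + c * r := by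
  have e : B + c * r = s ^ 2 * (W ^ 2 - 1 + (1 - μ) * (s ^ 4 * k ^ 2 * r)) := by
    rw [hc]
    have : B + (B - μ * s ^ 6 * k ^ 2) * r = B * (1 + r) - μ * s ^ 6 * k ^ 2 * r := by ring
    rw [this, ← hsr, hB]; ring
  rw [e]
  have h2 : 0 ≤ (1 - μ) * (s ^ 4 * k ^ 2 * r) := mul_nonneg (by linarith) (by positivity)
  have h3 : 0 < W ^ 2 - 1 := by nlinarith
  exact mul_pos (by positivity) (by linarith)

lemma neg_aux (r B c G Gx : ℝ) (hB : 0 < B) (hrad : 0 < B + c * r) (hG : G ≤ 0) (hGx : Gx ≤ 0)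
    (hle : r * G ≤ Gx) : B * G + c * Gx ≤ 0 := by
  rcases le_total 0 c with h | h
  · nlinarith [mul_nonpos_of_nonneg_of_nonpos h hGx]
  · have := mul_le_mul_of_nonpos_left hle h
    nlinarith

set_option maxHeartbeats 1000000 in
lemma not_interior_max (μ : ℝ) (h0 : 0 ≤ μ) (h1 : μ ≤ 1) (w : ℝ × ℝ → ℝ) (Ω : Set (ℝ × ℝ))
    (ho : IsOpen Ω) (hw : ContDiffOn ℝ 2 w Ω)
    (x : ℝ × ℝ) (hx : x ∈ Ω) (hm : ∀ y ∈ Ω, gaux w y ≤ gaux w x) (hN : Nop μ w x = 0)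
    (hw1 : 1 < w x) : False := by
  obtain ⟨s, hs⟩ : ∃ s, s = √(1 + x.1 ^ 2 + x.2 ^ 2) := ⟨_, rfl⟩
  have hsp : 0 < s := by rw [hs]; positivity
  have hs2 : 1 + x.1 ^ 2 + x.2 ^ 2 = s ^ 2 := by rw [hs, Real.sq_sqrt (by positivity)]
  have T := max_test w Ω ho hw x hx hm s hs
  have T1 := T (1, 0)
  have T2 := T (0, 1)
  have T3 := T x
  have T4 := T (-x.2, x.1)
  clear T
  simp only [Nop, b2, D2, gradv, dotxi, Prod.smul_fst, Prod.smul_snd, Prod.fst_add, Prod.snd_add,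
    smul_eq_mul] at *
  rw [hs2] at hN
  generalize pd1 (pd1 w) x = a11 at *
  generalize pd1 (pd2 w) x = a12 at *
  generalize pd2 (pd1 w) x = a21 at *
  generalize pd2 (pd2 w) x = a22 at *
  generalize pd1 w x = p1 at *
  generalize pd2 w x = p2 at *
  generalize w x = W at *
  obtain ⟨x1, x2⟩ := x
  simp only at *
  obtain ⟨k, hk⟩ : ∃ k, k = (W / s + 2) / s := ⟨_, rfl⟩
  have hp1 : p1 = -k * x1 := by
    have := T1.1
    rw [hk]; field_simp at this ⊢; linarith
  have hp2 : p2 = -k * x2 := by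
    have := T2.1
    rw [hk]; field_simp at this ⊢; linarith
  obtain ⟨r, hr⟩ : ∃ r, r = x1 ^ 2 + x2 ^ 2 := ⟨_, rfl⟩
  have hr0 : 0 ≤ r := by rw [hr]; positivity
  have hsr : s ^ 2 = 1 + r := by rw [hr]; linarith
  obtain ⟨G1, hG1⟩ : ∃ G1, G1 = a11 * s + 2 * p1 * (x1 / s) + W * (1 / s - x1 ^ 2 / s ^ 3) + 2 :=
    ⟨_, rfl⟩
  obtain ⟨G2, hG2⟩ : ∃ G2, G2 = a22 * s + 2 * p2 * (x2 / s) + W * (1 / s - x2 ^ 2 / s ^ 3) + 2 :=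
    ⟨_, rfl⟩
  obtain ⟨H, hH⟩ : ∃ H, H = (a12 + a21) * s + 2 * (p1 * x2 + p2 * x1) / s
      - 2 * W * x1 * x2 / s ^ 3 := ⟨_, rfl⟩
  have t1 : G1 ≤ 0 := by
    refine le_of_eq_of_le ?_ T1.2
    rw [hG1]; ring
  have t2 : G2 ≤ 0 := by
    refine le_of_eq_of_le ?_ T2.2
    rw [hG2]; ring
  have t3 : x1 ^ 2 * G1 + x2 ^ 2 * G2 + x1 * x2 * H ≤ 0 := by
    refine le_of_eq_of_le ?_ T3.2
    rw [hG1, hG2, hH]; ring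
  have t4 : x2 ^ 2 * G1 + x1 ^ 2 * G2 - x1 * x2 * H ≤ 0 := by
    refine le_of_eq_of_le ?_ T4.2
    rw [hG1, hG2, hH]; ring
  obtain ⟨B, hB⟩ : ∃ B, B = W ^ 2 - 1 + s ^ 4 * k ^ 2 * r := ⟨_, rfl⟩
  have hB' : W ^ 2 - 1 + s ^ 2 * (p1 ^ 2 + p2 ^ 2 + (p1 * x1 + p2 * x2) ^ 2) = B := by
    rw [hB, hp1, hp2]
    have : s ^ 4 = s ^ 2 * (1 + r) := by rw [← hsr]; ring
    rw [this, hr]; ring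
  rw [hB'] at hN
  obtain ⟨c, hc⟩ : ∃ c, c = B - μ * s ^ 6 * k ^ 2 := ⟨_, rfl⟩
  have hBpos : 0 < B := by
    have h2 : 0 ≤ s ^ 4 * k ^ 2 * r := by positivity
    have h3 : 0 < W ^ 2 - 1 := by nlinarith only [hw1]
    linarith only [h2, h3, hB]
  have hrad : 0 < B + c * r := rad_aux μ s k r B c W h1 hsp hr0 hsr hw1 hB hc
  have hW : W = k * s ^ 2 - 2 * s := by rw [hk]; field_simp; ring
  have hGs : G1 + G2 = (a11 + a22) * s - 3 * k * r / s + 2 * k * s + 2 * r / s ^ 2 := by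
    rw [hG1, hG2, hp1, hp2, hW, hr]; field_simp; ring
  have hGx : x1 ^ 2 * G1 + x2 ^ 2 * G2 + x1 * x2 * H
      = (x1 ^ 2 * a11 + x1 * x2 * (a12 + a21) + x2 ^ 2 * a22) * s
        - 3 * k * r ^ 2 / s + k * s * r + 2 * r ^ 2 / s ^ 2 := by
    rw [hG1, hG2, hH, hp1, hp2, hW, hr]; field_simp; ring
  have hid := ident_aux μ s k r B c W (a11 + a22)
    (x1 ^ 2 * a11 + x1 * x2 * (a12 + a21) + x2 ^ 2 * a22) (G1 + G2)
    (x1 ^ 2 * G1 + x2 ^ 2 * G2 + x1 * x2 * H) hsp hsr hW hc hGs hGx (by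
      have q1 : p1 + (p1 * x1 + p2 * x2) * x1 = - k * s ^ 2 * x1 := by
        rw [hsr, hp1, hp2, hr]; ring
      have q2 : p2 + (p1 * x1 + p2 * x2) * x2 = - k * s ^ 2 * x2 := by
        rw [hsr, hp1, hp2, hr]; ring
      have q3 : p1 * x1 + p2 * x2 = - k * r := by rw [hp1, hp2, hr]; ring
      have q4 : W ^ 2 - 1 = B - s ^ 4 * k ^ 2 * r := by rw [hB]; ring
      rw [q1, q2, q3, q4] at hN
      rw [← hN]; ring)
  have hneg := neg_aux r B c (G1 + G2) (x1 ^ 2 * G1 + x2 ^ 2 * G2 + x1 * x2 * H) hBpos hrad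
    (by linarith) t3 (by rw [hr]; linarith)
  linarith

lemma not_interior_min (μ : ℝ) (w : ℝ × ℝ → ℝ) (Ω : Set (ℝ × ℝ))
    (ho : IsOpen Ω) (hw : ContDiffOn ℝ 2 w Ω)
    (x : ℝ × ℝ) (hx : x ∈ Ω) (hm : ∀ y ∈ Ω, w x ≤ w y) (hN : Nop μ w x = 0)
    (hw1 : 1 < w x) : False := by
  have T := min_test w Ω ho hw x hx hm
  have T1 := T (1, 0)
  have T2 := T (0, 1)
  have T3 := (T x).2
  simp only [one_mul, zero_mul, add_zero, zero_add] at T1 T2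
  have hb : b2 w x = w x ^ 2 - 1 := by simp [b2, dotxi, T1.1, T2.1]
  have hbp : 0 < w x ^ 2 - 1 := by nlinarith
  have h11 : 0 ≤ pd1 (pd1 w) x := by simpa [D2] using T1.2
  have h22 : 0 ≤ pd2 (pd2 w) x := by simpa [D2] using T2.2
  have hz : D2 w (gradv w x + dotxi w x • x) (gradv w x + dotxi w x • x) x = 0 := by
    simp [D2, gradv, dotxi, T1.1, T2.1]
  have hd : dotxi w x = 0 := by simp [dotxi, T1.1, T2.1]
  rw [Nop, hz, hd, hb] at hN
  have e1 : 0 ≤ (w x ^ 2 - 1) * (pd1 (pd1 w) x + pd2 (pd2 w) x + D2 w x x x) := by positivity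
  have e2 : 0 < 2 * (w x ^ 2 - 1) * w x / (1 + x.1 ^ 2 + x.2 ^ 2) := by positivity
  have e3 : (2 - μ) * (w x ^ 2 - 1) + μ * (w x ^ 2 - 1) = 2 * (w x ^ 2 - 1) := by ring
  rw [e3] at hN
  linarith

theorem Linfty_estimate_for_w
    (ΩD : Set (ℝ × ℝ)) (hΩo : IsOpen ΩD) (hΩb : Bornology.IsBounded ΩD)
    (hΩc : Convex ℝ ΩD) :
    ∃ C : ℝ, 0 < C ∧
      ∀ μ : ℝ, 0 ≤ μ → μ ≤ 1 →
      ∀ ε : ℝ, 0 < ε → ε ≤ 1 →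
      ∀ w : ℝ × ℝ → ℝ,
        ContinuousOn w (closure ΩD) →
        ContDiffOn ℝ 2 w ΩD →
        (∀ x ∈ ΩD, Nop μ w x = 0) →
        (∀ x ∈ ΩD, 1 < w x) →
        (∀ x ∈ frontier ΩD, w x = 1 + ε) →
        ∀ x ∈ ΩD, 1 + ε < w x ∧ w x ≤ C := by
  obtain ⟨R, hR⟩ := (hΩb.closure).exists_norm_le
  refine ⟨2 * √(1 + 2 * R ^ 2) + 2 * R ^ 2, by positivity, ?_⟩
  intro μ h0 h1 ε hε hε1 w hwc hw hN hw1 hbd x hx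
  have hK : IsCompact (closure ΩD) := hΩb.isCompact_closure
  have hne : (closure ΩD).Nonempty := ⟨x, subset_closure hx⟩
  have hfr : ∀ y ∈ closure ΩD, y ∉ ΩD → y ∈ frontier ΩD := fun y hy hn => by
    rw [hΩo.frontier_eq]; exact ⟨hy, hn⟩
  constructor
  · obtain ⟨z, hz, hzm⟩ := hK.exists_isMinOn hne hwc
    have hni : ∀ y ∈ ΩD, ¬ (∀ u ∈ ΩD, w y ≤ w u) := fun y hy hm =>
      not_interior_min μ w ΩD hΩo hw y hy hm (hN y hy) (hw1 y hy)
    have hzf : z ∈ frontier ΩD := hfr z hz fun h => hni z h fun u hu => hzm (subset_closure hu)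
    by_contra hcon
    push Not at hcon
    refine hni x hx fun u hu => ?_
    have : w z ≤ w u := hzm (subset_closure hu)
    rw [hbd z hzf] at this
    linarith
  · have hgc : ContinuousOn (gaux w) (closure ΩD) := by
      unfold gaux
      exact (hwc.mul (by fun_prop)).add (by fun_prop)
    obtain ⟨z, hz, hzm⟩ := hK.exists_isMaxOn hne hgc
    have hzf : z ∈ frontier ΩD := hfr z hz fun h =>
      not_interior_max μ h0 h1 w ΩD hΩo hw z h (fun u hu => hzm (subset_closure hu)) (hN z h)
        (hw1 z h)
    have hle : gaux w x ≤ gaux w z := hzm (subset_closure hx)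
    have hzn := hR z hz
    have hz1 : z.1 ^ 2 ≤ R ^ 2 := sq_le_sq' (by have := abs_le.1 ((norm_fst_le z).trans hzn); linarith [this.1])
      (abs_le.1 ((norm_fst_le z).trans hzn)).2
    have hz2 : z.2 ^ 2 ≤ R ^ 2 := sq_le_sq' (by have := abs_le.1 ((norm_snd_le z).trans hzn); linarith [this.1])
      (abs_le.1 ((norm_snd_le z).trans hzn)).2
    have hsq : √(1 + z.1 ^ 2 + z.2 ^ 2) ≤ √(1 + 2 * R ^ 2) := Real.sqrt_le_sqrt (by linarith)
    have hgz : gaux w z ≤ 2 * √(1 + 2 * R ^ 2) + 2 * R ^ 2 := by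
      unfold gaux
      rw [hbd z hzf]
      have : (1 + ε) * √(1 + z.1 ^ 2 + z.2 ^ 2) ≤ 2 * √(1 + 2 * R ^ 2) := by
        gcongr; linarith
      linarith
    have hgx : w x ≤ gaux w x := by
      unfold gaux
      have : 1 ≤ √(1 + x.1 ^ 2 + x.2 ^ 2) := Real.one_le_sqrt.2 (by nlinarith [sq_nonneg x.1, sq_nonneg x.2])
      nlinarith [hw1 x hx, sq_nonneg x.1, sq_nonneg x.2]
    linarith
end

section
/- Let Ω ⊂ ℝ² be open and bounded, μ ∈ [0,1], and let ψ ∈ C¹(cl(Ω)) ∩ C³(Ω) satisfy ℱ(μ,ψ) = 0 in Ω and ψ(ξ) > √(1+|ξ|²) for all ξ ∈ Ω. Then the maximum of |Dψ| over cl(Ω) is attained on the boundary: max_{cl(Ω)} |Dψ| = max_{∂Ω} |Dψ|. -/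
open Real Set

lemma pd_contDiffOn {Ω : Set (ℝ × ℝ)} (hΩ : IsOpen Ω) {f : ℝ × ℝ → ℝ} {n m : WithTop ℕ∞}
    (hf : ContDiffOn ℝ n f Ω) (h : m + 1 ≤ n) (v : ℝ × ℝ) :
    ContDiffOn ℝ m (fun x => fderiv ℝ f x v) Ω :=
  (hf.fderiv_of_isOpen hΩ h).clm_apply contDiffOn_const

lemma line_deriv {u : ℝ × ℝ → ℝ} {x d : ℝ × ℝ} {t : ℝ}
    (hu : DifferentiableAt ℝ u (x + t • d)) :
    HasDerivAt (fun s : ℝ => u (x + s • d))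
      (d.1 * pd1 u (x + t • d) + d.2 * pd2 u (x + t • d)) t := by
  have h1 : HasDerivAt (fun s : ℝ => x + s • d) d t := by
    simpa using ((hasDerivAt_id t).smul_const d).const_add x
  have h2 := hu.hasFDerivAt.comp_hasDerivAt t h1
  refine h2.congr_deriv ?_
  have : d = d.1 • ((1 : ℝ), (0 : ℝ)) + d.2 • ((0 : ℝ), (1 : ℝ)) := by
    ext <;> simp
  have h3 := congrArg (fderiv ℝ u (x + t • d)) this
  rw [map_add, map_smul, map_smul] at h3
  rw [h3]
  simp only [pd1, pd2, smul_eq_mul]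

lemma line_deriv0 {u : ℝ × ℝ → ℝ} {x d : ℝ × ℝ}
    (hu : DifferentiableAt ℝ u x) :
    HasDerivAt (fun s : ℝ => u (x + s • d))
      (d.1 * pd1 u x + d.2 * pd2 u x) 0 := by
  have := line_deriv (u := u) (x := x) (d := d) (t := 0) (by simpa using hu)
  simpa using this

lemma pd_symm {Ω : Set (ℝ × ℝ)} (hΩ : IsOpen Ω) {f : ℝ × ℝ → ℝ}
    (hf : ContDiffOn ℝ 2 f Ω) {x : ℝ × ℝ} (hx : x ∈ Ω) :
    pd2 (pd1 f) x = pd1 (pd2 f) x := by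
  have hfx : ContDiffAt ℝ 2 f x := hf.contDiffAt (hΩ.mem_nhds hx)
  have hs := hfx.isSymmSndFDerivAt (by simp)
  have hd : DifferentiableAt ℝ (fderiv ℝ f) x :=
    ((hf.fderiv_of_isOpen hΩ (m := 1) (by norm_num)).contDiffAt
      (hΩ.mem_nhds hx)).differentiableAt (by norm_num)
  have key : ∀ v w : ℝ × ℝ, fderiv ℝ (fun y => fderiv ℝ f y v) x w
      = fderiv ℝ (fderiv ℝ f) x w v := by
    intro v w
    rw [fderiv_clm_apply hd (differentiableAt_const v)]
    simp
  unfold pd1 pd2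
  rw [key, key]
  exact hs _ _

/-- Second-order necessary condition at a local maximum on the line. -/
lemma second_test {φ φ' : ℝ → ℝ} {c : ℝ} (hφ : ∀ᶠ t in nhds (0 : ℝ), HasDerivAt φ (φ' t) t)
    (hφ' : HasDerivAt φ' c 0) (hmax : IsLocalMax φ 0) : c ≤ 0 := by
  by_contra hc
  push Not at hc
  have e1 : deriv φ =ᶠ[nhds 0] φ' := by
    filter_upwards [hφ] with t ht using ht.deriv
  have e2 : deriv (deriv φ) 0 = c := by rw [e1.deriv_eq]; exact hφ'.deriv
  have hmin : IsLocalMin φ 0 :=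
    isLocalMin_of_deriv_deriv_pos (by rw [e2]; exact hc) hmax.deriv_eq_zero
      hφ.self_of_nhds.continuousAt
  have hconst : φ =ᶠ[nhds 0] fun _ => φ 0 := by
    filter_upwards [hmax, hmin] with t h1 h2 using le_antisymm h1 h2
  have e3 : deriv φ =ᶠ[nhds 0] fun _ => 0 := by
    have := hconst.deriv
    simpa using this
  have e4 : deriv (deriv φ) 0 = 0 := by rw [e3.deriv_eq]; simp
  linarith

lemma max_principle
    (Ω : Set (ℝ × ℝ)) (hΩo : IsOpen Ω) (hΩb : Bornology.IsBounded Ω)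
    (f F : ℝ × ℝ → ℝ) (hF : ContinuousOn F (closure Ω)) (hf : ContDiffOn ℝ 2 f Ω)
    (hFf : ∀ x ∈ Ω, F x = f x)
    (A11 A12 A22 B1 B2 : ℝ × ℝ → ℝ)
    (hA11 : ContinuousOn A11 Ω) (hB1 : ContinuousOn B1 Ω)
    (hpos : ∀ x ∈ Ω, 0 < A11 x) (hdet : ∀ x ∈ Ω, 0 ≤ A11 x * A22 x - A12 x ^ 2)
    (heq : ∀ x ∈ Ω, A11 x * pd1 (pd1 f) x + 2 * A12 x * pd1 (pd2 f) x + A22 x * pd2 (pd2 f) x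
      + B1 x * pd1 f x + B2 x * pd2 f x = 0)
    (m : ℝ) (hm : ∀ x ∈ frontier Ω, F x ≤ m) :
    ∀ x ∈ closure Ω, F x ≤ m := by
  intro xs hxs
  by_contra hlt
  push Not at hlt
  have hcomp : IsCompact (closure Ω) := hΩb.isCompact_closure
  obtain ⟨c, hmc, hcM⟩ := exists_between hlt
  set K : Set (ℝ × ℝ) := closure Ω ∩ F ⁻¹' (Ici c) with hK
  have hKc : IsCompact K :=
    hcomp.of_isClosed_subset (hF.preimage_isClosed_of_isClosed isClosed_closure isClosed_Ici)
      inter_subset_left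
  have hin : ∀ x ∈ closure Ω, m < F x → x ∈ Ω := by
    intro x hx hmx
    by_contra hn
    have : x ∈ frontier Ω := by
      rw [hΩo.frontier_eq]; exact ⟨hx, hn⟩
    linarith [hm x this]
  have hKΩ : K ⊆ Ω := fun x hx => hin x hx.1 (lt_of_lt_of_le hmc hx.2)
  have hKne : K.Nonempty := ⟨xs, hxs, hcM.le⟩
  obtain ⟨y0, hy0, hmin⟩ := hKc.exists_isMinOn hKne (hA11.mono hKΩ)
  obtain ⟨y1, hy1, hmin1⟩ := hKc.exists_isMinOn hKne (hB1.mono hKΩ)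
  set δ := A11 y0
  have hδ : 0 < δ := hpos y0 (hKΩ hy0)
  set lam : ℝ := |B1 y1| / δ + 1 with hlam
  have hlam0 : 0 < lam := by positivity
  have hlamK : ∀ x ∈ K, 0 < lam * A11 x + B1 x := by
    intro x hx
    have h1 : δ ≤ A11 x := hmin hx
    have h2 : B1 y1 ≤ B1 x := hmin1 hx
    have h3 : lam * δ = |B1 y1| + δ := by rw [hlam]; field_simp
    have h4 := neg_abs_le (B1 y1)
    nlinarith [mul_le_mul_of_nonneg_left h1 hlam0.le]
  have hec : ContinuousOn (fun x : ℝ × ℝ => Real.exp (lam * x.1)) (closure Ω) := by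
    fun_prop
  obtain ⟨z, hz, hzmax⟩ := hcomp.exists_isMaxOn ⟨xs, hxs⟩ hec
  set C := Real.exp (lam * z.1)
  have hC : 0 < C := Real.exp_pos _
  set ε : ℝ := (F xs - c) / C with hε
  have hε0 : 0 < ε := div_pos (by linarith) hC
  have hεC : ε * C = F xs - c := by rw [hε]; field_simp
  obtain ⟨x0, hx0, hx0max⟩ := hcomp.exists_isMaxOn ⟨xs, hxs⟩
    (hF.add (hec.const_smul ε))
  have hx0K : x0 ∈ K := by
    refine ⟨hx0, ?_⟩
    have h1 : F xs + ε * Real.exp (lam * xs.1) ≤ F x0 + ε * Real.exp (lam * x0.1) := by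
      simpa using hx0max hxs
    have h2 : Real.exp (lam * x0.1) ≤ C := hzmax hx0
    have h3 : ε * Real.exp (lam * x0.1) ≤ ε * C := mul_le_mul_of_nonneg_left h2 hε0.le
    have h4 : 0 < ε * Real.exp (lam * xs.1) := by positivity
    show c ≤ F x0
    linarith
  have hx0Ω : x0 ∈ Ω := hKΩ hx0K
  set E := Real.exp (lam * x0.1) with hE
  have hE0 : 0 < E := Real.exp_pos _
  have hf1 : ContDiffOn ℝ 1 (pd1 f) Ω := pd_contDiffOn hΩo hf (by norm_num) _
  have hf2 : ContDiffOn ℝ 1 (pd2 f) Ω := pd_contDiffOn hΩo hf (by norm_num) _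
  have hdf : ∀ x ∈ Ω, DifferentiableAt ℝ f x := fun x hx =>
    (hf.contDiffAt (hΩo.mem_nhds hx)).differentiableAt (by norm_num)
  have hd1 : DifferentiableAt ℝ (pd1 f) x0 :=
    (hf1.contDiffAt (hΩo.mem_nhds hx0Ω)).differentiableAt (by norm_num)
  have hd2 : DifferentiableAt ℝ (pd2 f) x0 :=
    (hf2.contDiffAt (hΩo.mem_nhds hx0Ω)).differentiableAt (by norm_num)
  have hexp : ∀ (d : ℝ × ℝ) (t : ℝ), HasDerivAt (fun s : ℝ => Real.exp (lam * (x0 + s • d).1))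
      (Real.exp (lam * (x0 + t • d).1) * (lam * d.1)) t := by
    intro d t
    have h1 : HasDerivAt (fun s : ℝ => lam * (x0 + s • d).1) (lam * d.1) t := by
      have : HasDerivAt (fun s : ℝ => x0.1 + s * d.1) d.1 t := by
        simpa using ((hasDerivAt_id t).mul_const d.1).const_add x0.1
      simpa using this.const_mul lam
    exact h1.exp
  have hcont : ∀ d : ℝ × ℝ, ContinuousAt (fun s : ℝ => x0 + s • d) 0 := by
    intro d; fun_prop
  have hev : ∀ d : ℝ × ℝ, ∀ᶠ t in nhds (0 : ℝ), x0 + t • d ∈ Ω := by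
    intro d
    apply (hcont d).eventually_mem
    simpa using hΩo.mem_nhds hx0Ω
  have hlm : ∀ d : ℝ × ℝ, IsLocalMax
      (fun s : ℝ => f (x0 + s • d) + ε * Real.exp (lam * (x0 + s • d).1)) 0 := by
    intro d
    filter_upwards [hev d] with t ht
    have h1 := hx0max (subset_closure ht)
    have h2 := hFf _ ht
    have h3 := hFf _ hx0Ω
    simp only [mem_ofPred_eq, Pi.add_apply, Pi.smul_apply, smul_eq_mul] at h1
    rw [h2, h3] at h1
    simpa using h1
  have hder : ∀ d : ℝ × ℝ, ∀ t : ℝ, x0 + t • d ∈ Ω → HasDerivAt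
      (fun s : ℝ => f (x0 + s • d) + ε * Real.exp (lam * (x0 + s • d).1))
      ((d.1 * pd1 f (x0 + t • d) + d.2 * pd2 f (x0 + t • d))
        + ε * (Real.exp (lam * (x0 + t • d).1) * (lam * d.1))) t := by
    intro d t ht
    exact (line_deriv (hdf _ ht)).add ((hexp d t).const_mul ε)
  have hgrad : ∀ d : ℝ × ℝ, d.1 * pd1 f x0 + d.2 * pd2 f x0 + ε * (E * (lam * d.1)) = 0 := by
    intro d
    have h := (hlm d).hasDerivAt_eq_zero (hder d 0 (by simpa using hx0Ω))
    simpa using h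
  have hsym := pd_symm hΩo hf hx0Ω
  have hhess : ∀ d : ℝ × ℝ, d.1 ^ 2 * (pd1 (pd1 f) x0 + ε * lam ^ 2 * E)
      + 2 * d.1 * d.2 * pd1 (pd2 f) x0 + d.2 ^ 2 * pd2 (pd2 f) x0 ≤ 0 := by
    intro d
    have h2 := (((line_deriv0 (d := d) hd1).const_mul d.1).add
      ((line_deriv0 (d := d) hd2).const_mul d.2)).add
      (((hexp d 0).mul_const (lam * d.1)).const_mul ε)
    have h3 := second_test (φ := fun s : ℝ => f (x0 + s • d) + ε * Real.exp (lam * (x0 + s • d).1))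
      ((hev d).mono (fun t ht => hder d t ht)) h2 (hlm d)
    rw [hsym] at h3
    simp only [zero_smul, add_zero] at h3
    rw [← hE] at h3
    linarith
  have g1 := hgrad (1, 0)
  have g2 := hgrad (0, 1)
  have q1 := hhess (A11 x0, A12 x0)
  have q2 := hhess (0, 1)
  have e0 := heq x0 hx0Ω
  have hp := hpos x0 hx0Ω
  have hdt := hdet x0 hx0Ω
  have hl := hlamK x0 hx0K
  simp only [] at g1 g2 q1 q2
  have g1' : pd1 f x0 = -(ε * lam * E) := by linarith
  have g2' : pd2 f x0 = 0 := by linarith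
  rw [g1', g2'] at e0
  have q2' : pd2 (pd2 f) x0 ≤ 0 := by linarith
  have h5 : 0 < A11 x0 * (ε * lam * E * (lam * A11 x0 + B1 x0)) := by positivity
  have h6 : (A11 x0 * A22 x0 - A12 x0 ^ 2) * pd2 (pd2 f) x0 ≤ 0 :=
    mul_nonpos_of_nonneg_of_nonpos hdt q2'
  have h7 : A11 x0 * (A11 x0 * pd1 (pd1 f) x0 + 2 * A12 x0 * pd1 (pd2 f) x0
      + A22 x0 * pd2 (pd2 f) x0
      + B1 x0 * -(ε * lam * E) + B2 x0 * 0) = 0 := by rw [e0, mul_zero]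
  nlinarith

/-- Ellipticity in algebraic form. -/
lemma ellip_form {x1 x2 p1 p2 χ μ : ℝ} (hμ0 : 0 ≤ μ) (hμ1 : μ ≤ 1)
    (h : 1 + x1 ^ 2 + x2 ^ 2 < (χ + p1 * x1 + p2 * x2) ^ 2) (v1 v2 : ℝ)
    (hv : v1 ≠ 0 ∨ v2 ≠ 0) :
    0 < (p1 ^ 2 + p2 ^ 2 + χ ^ 2 - 1) * (v1 ^ 2 + v2 ^ 2 + (x1 * v1 + x2 * v2) ^ 2)
      - μ * ((p1 - χ * x1) * v1 + (p2 - χ * x2) * v2) ^ 2 := by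
  have hvv : 0 < v1 ^ 2 + v2 ^ 2 := by
    rcases hv with h | h
    · have := sq_pos_of_ne_zero h; nlinarith [sq_nonneg v2]
    · have := sq_pos_of_ne_zero h; nlinarith [sq_nonneg v1]
  set V := v1 ^ 2 + v2 ^ 2 + (x1 * v1 + x2 * v2) ^ 2 with hV
  have hV0 : 0 < V := by positivity
  set N := 1 + x1 ^ 2 + x2 ^ 2 with hN
  have hN0 : 0 < N := by positivity
  set Q := (p1 - χ * x1) * v1 + (p2 - χ * x2) * v2 with hQ
  set W := χ + p1 * x1 + p2 * x2 with hW
  -- third direction: cross product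
  set T := p1 * (v2 + x2 * (x1 * v1 + x2 * v2)) - p2 * (v1 + x1 * (x1 * v1 + x2 * v2))
    + χ * (x2 * v1 - x1 * v2) with hT
  have id1 : N * V * (p1 ^ 2 + p2 ^ 2 + χ ^ 2) = V * W ^ 2 + N * Q ^ 2 + T ^ 2 := by
    rw [hN, hV, hW, hQ, hT]; ring
  have h2 : 0 < N * ((p1 ^ 2 + p2 ^ 2 + χ ^ 2 - 1) * V - μ * Q ^ 2) := by
    have : 0 < V * (W ^ 2 - N) := mul_pos hV0 (by linarith)
    have : 0 ≤ (1 - μ) * (N * Q ^ 2) := mul_nonneg (by linarith) (by positivity)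
    nlinarith [sq_nonneg T]
  exact (mul_pos_iff_of_pos_left hN0).1 h2

/-- First-order coefficient of the linear equation solved by the directional derivatives. -/
noncomputable def coefB (μ a χ p1 p2 r k t x1 x2 : ℝ) : ℝ :=
  2 * (r + t + (x1 * x1 * r + 2 * (x1 * x2) * k + x2 * x2 * t)) * (p1 - χ * x1) + 2 * a * x1
    - 2 * μ * ((r * (p1 - χ * x1) + k * (p2 - χ * x2))
      + ((p1 - χ * x1) * (r * x1 + k * x2) + (p2 - χ * x2) * (k * x1 + t * x2)) * x1
      - χ * (p1 - χ * x1))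

lemma dir_max
    (Ω : Set (ℝ × ℝ)) (hΩo : IsOpen Ω) (hΩb : Bornology.IsBounded Ω)
    (μ : ℝ) (hμ0 : 0 ≤ μ) (hμ1 : μ ≤ 1)
    (ψ : ℝ × ℝ → ℝ) (hψ3 : ContDiffOn ℝ 3 ψ Ω)
    (g : ℝ × ℝ → ℝ × ℝ)
    (hgc : ContinuousOn g (closure Ω))
    (hgeq : ∀ x ∈ Ω, g x = (pd1 ψ x, pd2 ψ x))
    (heq : ∀ x ∈ Ω, Fop μ ψ x = 0)
    (hsup : ∀ x ∈ Ω, Real.sqrt (1 + x.1 ^ 2 + x.2 ^ 2) < ψ x)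
    (c s m : ℝ) (hm : ∀ y ∈ frontier Ω, c * (g y).1 + s * (g y).2 ≤ m) :
    ∀ x ∈ closure Ω, c * (g x).1 + s * (g x).2 ≤ m := by
  have hp1 : ContDiffOn ℝ 2 (pd1 ψ) Ω := pd_contDiffOn hΩo hψ3 (by norm_num) _
  have hp2 : ContDiffOn ℝ 2 (pd2 ψ) Ω := pd_contDiffOn hΩo hψ3 (by norm_num) _
  have hp11 : ContDiffOn ℝ 1 (pd1 (pd1 ψ)) Ω := pd_contDiffOn hΩo hp1 (by norm_num) _
  have hp12 : ContDiffOn ℝ 1 (pd1 (pd2 ψ)) Ω := pd_contDiffOn hΩo hp2 (by norm_num) _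
  have hp21 : ContDiffOn ℝ 1 (pd2 (pd1 ψ)) Ω := pd_contDiffOn hΩo hp1 (by norm_num) _
  have hp22 : ContDiffOn ℝ 1 (pd2 (pd2 ψ)) Ω := pd_contDiffOn hΩo hp2 (by norm_num) _
  have dif : ∀ {u : ℝ × ℝ → ℝ} {n : WithTop ℕ∞}, ContDiffOn ℝ n u Ω → n ≠ 0 → ∀ x ∈ Ω,
      DifferentiableAt ℝ u x := fun hu hn x hx =>
    (hu.contDiffAt (hΩo.mem_nhds hx)).differentiableAt hn
  have sym : ∀ x ∈ Ω, pd2 (pd1 ψ) x = pd1 (pd2 ψ) x := fun x hx =>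
    pd_symm hΩo (hψ3.of_le (by norm_num)) hx
  have symev : ∀ x ∈ Ω, pd2 (pd1 ψ) =ᶠ[nhds x] pd1 (pd2 ψ) := fun x hx => by
    filter_upwards [hΩo.mem_nhds hx] with y hy using sym y hy
  -- third derivatives
  have t112 : ∀ x ∈ Ω, pd1 (pd2 (pd1 ψ)) x = pd1 (pd1 (pd2 ψ)) x := fun x hx => by
    conv_lhs => rw [pd1, (symev x hx).fderiv_eq]
    rfl
  have t212 : ∀ x ∈ Ω, pd2 (pd2 (pd1 ψ)) x = pd2 (pd1 (pd2 ψ)) x := fun x hx => by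
    conv_lhs => rw [pd2, (symev x hx).fderiv_eq]
    rfl
  have t211 : ∀ x ∈ Ω, pd2 (pd1 (pd1 ψ)) x = pd1 (pd1 (pd2 ψ)) x := fun x hx => by
    rw [pd_symm hΩo hp1 hx, t112 x hx]
  have t221 : ∀ x ∈ Ω, pd2 (pd1 (pd2 ψ)) x = pd1 (pd2 (pd2 ψ)) x := fun x hx =>
    pd_symm hΩo hp2 hx
  set f : ℝ × ℝ → ℝ := fun x => c * pd1 ψ x + s * pd2 ψ x with hfdef
  have hf : ContDiffOn ℝ 2 f Ω := (contDiffOn_const.mul hp1).add (contDiffOn_const.mul hp2)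
  have lin : ∀ (u v : ℝ × ℝ → ℝ) (x d : ℝ × ℝ), DifferentiableAt ℝ u x → DifferentiableAt ℝ v x →
      fderiv ℝ (fun y => c * u y + s * v y) x d = c * fderiv ℝ u x d + s * fderiv ℝ v x d := by
    intro u v x d hu hv
    have := ((hu.hasFDerivAt.const_mul c).add (hv.hasFDerivAt.const_mul s)).fderiv
    have h2 : fderiv ℝ (fun y => c * u y + s * v y) x = c • fderiv ℝ u x + s • fderiv ℝ v x := this
    rw [h2]; simp
  have f1 : ∀ x ∈ Ω, pd1 f x = c * pd1 (pd1 ψ) x + s * pd1 (pd2 ψ) x := fun x hx =>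
    lin _ _ x _ (dif hp1 (by norm_num) x hx) (dif hp2 (by norm_num) x hx)
  have f2 : ∀ x ∈ Ω, pd2 f x = c * pd2 (pd1 ψ) x + s * pd2 (pd2 ψ) x := fun x hx =>
    lin _ _ x _ (dif hp1 (by norm_num) x hx) (dif hp2 (by norm_num) x hx)
  have f11 : ∀ x ∈ Ω, pd1 (pd1 f) x
      = c * pd1 (pd1 (pd1 ψ)) x + s * pd1 (pd1 (pd2 ψ)) x := fun x hx => by
    have : pd1 f =ᶠ[nhds x] fun y => c * pd1 (pd1 ψ) y + s * pd1 (pd2 ψ) y := by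
      filter_upwards [hΩo.mem_nhds hx] with y hy using f1 y hy
    conv_lhs => rw [pd1, this.fderiv_eq]
    exact lin _ _ x _ (dif hp11 (by norm_num) x hx) (dif hp12 (by norm_num) x hx)
  have f12 : ∀ x ∈ Ω, pd1 (pd2 f) x
      = c * pd1 (pd2 (pd1 ψ)) x + s * pd1 (pd2 (pd2 ψ)) x := fun x hx => by
    have : pd2 f =ᶠ[nhds x] fun y => c * pd2 (pd1 ψ) y + s * pd2 (pd2 ψ) y := by
      filter_upwards [hΩo.mem_nhds hx] with y hy using f2 y hy
    conv_lhs => rw [pd1, this.fderiv_eq]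
    exact lin _ _ x _ (dif hp21 (by norm_num) x hx) (dif hp22 (by norm_num) x hx)
  have f22 : ∀ x ∈ Ω, pd2 (pd2 f) x
      = c * pd2 (pd2 (pd1 ψ)) x + s * pd2 (pd2 (pd2 ψ)) x := fun x hx => by
    have : pd2 f =ᶠ[nhds x] fun y => c * pd2 (pd1 ψ) y + s * pd2 (pd2 ψ) y := by
      filter_upwards [hΩo.mem_nhds hx] with y hy using f2 y hy
    conv_lhs => rw [pd2, this.fderiv_eq]
    exact lin _ _ x _ (dif hp21 (by norm_num) x hx) (dif hp22 (by norm_num) x hx)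
  have cψ := hψ3.continuousOn
  have c1 := hp1.continuousOn
  have c2 := hp2.continuousOn
  have c11 := hp11.continuousOn
  have c12 := hp12.continuousOn
  have c22 := hp22.continuousOn
  have cχ : ContinuousOn (chiF ψ) Ω := by
    show ContinuousOn (fun x => ψ x - (pd1 ψ x * x.1 + pd2 ψ x * x.2)) Ω
    fun_prop
  have ca : ContinuousOn (sqSound ψ) Ω := by
    show ContinuousOn (fun x => (pd1 ψ x) ^ 2 + (pd2 ψ x) ^ 2 + (chiF ψ x) ^ 2 - 1) Ω
    fun_prop
  have ell : ∀ x ∈ Ω, ∀ v1 v2 : ℝ, (v1 ≠ 0 ∨ v2 ≠ 0) →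
      0 < sqSound ψ x * (v1 ^ 2 + v2 ^ 2 + (x.1 * v1 + x.2 * v2) ^ 2)
      - μ * ((pd1 ψ x - chiF ψ x * x.1) * v1 + (pd2 ψ x - chiF ψ x * x.2) * v2) ^ 2 := by
    intro x hx v1 v2 hv
    have h := (Real.sqrt_lt' ((Real.sqrt_nonneg _).trans_lt (hsup x hx))).1 (hsup x hx)
    have e : chiF ψ x + pd1 ψ x * x.1 + pd2 ψ x * x.2 = ψ x := by
      simp only [chiF, dotxi]; ring
    exact ellip_form hμ0 hμ1 (by rw [e]; exact h) v1 v2 hv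
  refine max_principle Ω hΩo hΩb f (fun x => c * (g x).1 + s * (g x).2)
    ((continuousOn_const.mul hgc.fst).add (continuousOn_const.mul hgc.snd)) hf
    (fun x hx => by simp only [hgeq x hx, hfdef])
    (fun x => sqSound ψ x * (1 + x.1 ^ 2) - μ * (pd1 ψ x - chiF ψ x * x.1) ^ 2)
    (fun x => sqSound ψ x * (x.1 * x.2)
      - μ * ((pd1 ψ x - chiF ψ x * x.1) * (pd2 ψ x - chiF ψ x * x.2)))
    (fun x => sqSound ψ x * (1 + x.2 ^ 2) - μ * (pd2 ψ x - chiF ψ x * x.2) ^ 2)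
    (fun x => coefB μ (sqSound ψ x) (chiF ψ x) (pd1 ψ x) (pd2 ψ x) (pd1 (pd1 ψ) x)
      (pd1 (pd2 ψ) x) (pd2 (pd2 ψ) x) x.1 x.2)
    (fun x => coefB μ (sqSound ψ x) (chiF ψ x) (pd2 ψ x) (pd1 ψ x) (pd2 (pd2 ψ) x)
      (pd1 (pd2 ψ) x) (pd1 (pd1 ψ) x) x.2 x.1)
    (by fun_prop) (by unfold coefB; fun_prop) ?_ ?_ ?_ m hm
  · intro x hx
    have := ell x hx 1 0 (Or.inl one_ne_zero)
    nlinarith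
  · intro x hx
    set A11 := sqSound ψ x * (1 + x.1 ^ 2) - μ * (pd1 ψ x - chiF ψ x * x.1) ^ 2 with hA11
    have h11 : 0 < A11 := by
      have := ell x hx 1 0 (Or.inl one_ne_zero)
      rw [hA11]; nlinarith
    set A12 := sqSound ψ x * (x.1 * x.2)
      - μ * ((pd1 ψ x - chiF ψ x * x.1) * (pd2 ψ x - chiF ψ x * x.2)) with hA12
    set A22 := sqSound ψ x * (1 + x.2 ^ 2) - μ * (pd2 ψ x - chiF ψ x * x.2) ^ 2 with hA22
    have h := ell x hx (-A12) A11 (Or.inr h11.ne')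
    have h' : 0 < A11 * (A11 * A22 - A12 ^ 2) := by
      have e : A11 * (A11 * A22 - A12 ^ 2) = A11 * (-A12) ^ 2 + 2 * A12 * ((-A12) * A11)
        + A22 * A11 ^ 2 := by ring
      rw [e]
      refine lt_of_lt_of_eq h ?_
      rw [hA11, hA12, hA22]
      ring
    exact ((mul_pos_iff_of_pos_left h11).1 h').le
  · intro x hx
    have ld : ∀ {u : ℝ × ℝ → ℝ} {n : WithTop ℕ∞}, ContDiffOn ℝ n u Ω → n ≠ 0 →
        HasDerivAt (fun t : ℝ => u (x + t • (c, s))) (c * pd1 u x + s * pd2 u x) 0 :=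
      fun hu hn => line_deriv0 (dif hu hn x hx)
    have dψ := ld hψ3 (by norm_num)
    have d1 := ld hp1 (by norm_num)
    have d2 := ld hp2 (by norm_num)
    have d11 := ld hp11 (by norm_num)
    have d12 := ld hp12 (by norm_num)
    have d21 := ld hp21 (by norm_num)
    have d22 := ld hp22 (by norm_num)
    have dx1 : HasDerivAt (fun t : ℝ => (x + t • ((c, s) : ℝ × ℝ)).1) c 0 := by
      simpa using ((hasDerivAt_id (0 : ℝ)).mul_const c).const_add x.1
    have dx2 : HasDerivAt (fun t : ℝ => (x + t • ((c, s) : ℝ × ℝ)).2) s 0 := by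
      simpa using ((hasDerivAt_id (0 : ℝ)).mul_const s).const_add x.2
    have dχ : HasDerivAt (fun t : ℝ => chiF ψ (x + t • (c, s)))
        (-(pd1 f x * x.1 + pd2 f x * x.2)) 0 := by
      have h := dψ.sub ((d1.mul dx1).add (d2.mul dx2))
      refine h.congr_deriv ?_
      rw [f1 x hx, f2 x hx, sym x hx]
      simp only [zero_smul, add_zero]
      ring
    have da : HasDerivAt (fun t : ℝ => sqSound ψ (x + t • (c, s)))
        (2 * (pd1 ψ x * pd1 f x + pd2 ψ x * pd2 f x
          - chiF ψ x * (pd1 f x * x.1 + pd2 f x * x.2))) 0 := by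
      have h := (((d1.pow 2).add (d2.pow 2)).add (dχ.pow 2)).sub_const 1
      refine h.congr_deriv ?_
      rw [f1 x hx, f2 x hx, sym x hx]
      simp only [zero_smul, add_zero]
      push_cast
      ring
    have dq1 := d1.sub (dχ.mul dx1)
    have dq2 := d2.sub (dχ.mul dx2)
    have dD : HasDerivAt (fun t : ℝ => D2 ψ (x + t • (c, s)) (x + t • (c, s)) (x + t • (c, s))) _ 0 :=
      ((((dx1.mul dx1).mul d11).add ((dx1.mul dx2).mul d12)).add
      ((dx2.mul dx1).mul d21)).add ((dx2.mul dx2).mul d22)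
    have dQ := ((((dq1.mul dq1).mul d11).add ((dq1.mul dq2).mul d12)).add
      ((dq2.mul dq1).mul d21)).add ((dq2.mul dq2).mul d22)
    have dF := (da.mul ((d11.add d22).add dD)).sub (dQ.const_mul μ)
    have dF0 : HasDerivAt (fun t : ℝ => Fop μ ψ (x + t • (c, s))) 0 0 := by
      have hev : ∀ᶠ t in nhds (0 : ℝ), x + t • ((c, s) : ℝ × ℝ) ∈ Ω := by
        have hc : ContinuousAt (fun t : ℝ => x + t • ((c, s) : ℝ × ℝ)) 0 := by fun_prop
        apply hc.eventually_mem
        simpa using hΩo.mem_nhds hx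
      refine (hasDerivAt_const (0 : ℝ) (0 : ℝ)).congr_of_eventuallyEq ?_
      filter_upwards [hev] with t ht using heq _ ht
    have hu := dF.unique dF0
    simp only [zero_smul, add_zero, Pi.add_apply, Pi.mul_apply, Pi.sub_apply, D2] at hu
    rw [f11 x hx, f12 x hx, f22 x hx]
    rw [f1 x hx, f2 x hx] at hu ⊢
    rw [t211 x hx, t221 x hx, t112 x hx, t212 x hx, t221 x hx, sym x hx] at hu
    rw [t112 x hx, t212 x hx, t221 x hx, sym x hx]
    rw [← hu]
    unfold coefB
    ring

/-- Interior gradient maximum principle: if `ψ ∈ C¹(cl Ω) ∩ C³(Ω)` solves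
`ℱ(μ,ψ) = 0` in `Ω` with `ψ > √(1+|ξ|²)` in `Ω`, then the maximum of `|Dψ|` over the
closure is attained on the boundary. Here `g` is the continuous extension of the
gradient of `ψ` to the closure. -/
theorem gradient_max_on_boundary
    (Ω : Set (ℝ × ℝ)) (hΩo : IsOpen Ω) (hΩb : Bornology.IsBounded Ω)
    (μ : ℝ) (hμ0 : 0 ≤ μ) (hμ1 : μ ≤ 1)
    (ψ : ℝ × ℝ → ℝ)
    (hψc : ContinuousOn ψ (closure Ω)) (hψ3 : ContDiffOn ℝ 3 ψ Ω)
    (g : ℝ × ℝ → ℝ × ℝ)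
    (hgc : ContinuousOn g (closure Ω))
    (hgeq : ∀ x ∈ Ω, g x = (pd1 ψ x, pd2 ψ x))
    (heq : ∀ x ∈ Ω, Fop μ ψ x = 0)
    (hsup : ∀ x ∈ Ω, Real.sqrt (1 + x.1 ^ 2 + x.2 ^ 2) < ψ x) :
    sSup ((fun y => Real.sqrt ((g y).1 ^ 2 + (g y).2 ^ 2)) '' closure Ω)
      = sSup ((fun y => Real.sqrt ((g y).1 ^ 2 + (g y).2 ^ 2)) '' frontier Ω) := by
  have hcomp : IsCompact (closure Ω) := hΩb.isCompact_closure
  have hfcl : frontier Ω ⊆ closure Ω := frontier_subset_closure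
  set G : ℝ × ℝ → ℝ := fun y => Real.sqrt ((g y).1 ^ 2 + (g y).2 ^ 2) with hG
  have hGc : ContinuousOn G (closure Ω) := by
    rw [hG]
    exact ((hgc.fst.pow 2).add (hgc.snd.pow 2)).sqrt
  have hbdd : BddAbove (G '' closure Ω) := (hcomp.image_of_continuousOn hGc).bddAbove
  have hbddf : BddAbove (G '' frontier Ω) := hbdd.mono (image_mono hfcl)
  rcases (closure Ω).eq_empty_or_nonempty with hem | hne
  · have : frontier Ω = ∅ := subset_empty_iff.1 (hem ▸ hfcl)
    rw [hem, this]
  have hm0 : 0 ≤ sSup (G '' frontier Ω) := by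
    apply Real.sSup_nonneg
    rintro _ ⟨y, -, rfl⟩
    exact Real.sqrt_nonneg _
  have hGf : ∀ y ∈ frontier Ω, G y ≤ sSup (G '' frontier Ω) := fun y hy =>
    le_csSup hbddf ⟨y, hy, rfl⟩
  have key : ∀ x ∈ closure Ω, G x ≤ sSup (G '' frontier Ω) := by
    intro x hx
    rcases eq_or_lt_of_le (Real.sqrt_nonneg ((g x).1 ^ 2 + (g x).2 ^ 2)) with h0 | hpos
    · show Real.sqrt _ ≤ _
      rw [← h0]; exact hm0
    set M := Real.sqrt ((g x).1 ^ 2 + (g x).2 ^ 2) with hM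
    have hMsq : M ^ 2 = (g x).1 ^ 2 + (g x).2 ^ 2 := Real.sq_sqrt (by positivity)
    set c := (g x).1 / M
    set s := (g x).2 / M
    have hcs : c ^ 2 + s ^ 2 = 1 := by
      simp only [c, s]; rw [div_pow, div_pow, ← add_div, ← hMsq]; field_simp
    have hle : ∀ y, c * (g y).1 + s * (g y).2 ≤ G y := by
      intro y
      apply Real.le_sqrt_of_sq_le
      nlinarith [sq_nonneg (c * (g y).2 - s * (g y).1)]
    have hxe : c * (g x).1 + s * (g x).2 = M := by
      simp only [c, s]
      field_simp
      linarith
    have := dir_max Ω hΩo hΩb μ hμ0 hμ1 ψ hψ3 g hgc hgeq heq hsup c s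
      (sSup (G '' frontier Ω)) (fun y hy => (hle y).trans (hGf y hy)) x hx
    show M ≤ _
    linarith
  apply le_antisymm
  · apply csSup_le (hne.image _)
    rintro _ ⟨y, hy, rfl⟩
    exact key y hy
  · rcases (frontier Ω).eq_empty_or_nonempty with hem | hfne
    · rw [hem, image_empty, Real.sSup_empty]
      apply Real.sSup_nonneg
      rintro _ ⟨y, -, rfl⟩
      exact Real.sqrt_nonneg _
    · exact csSup_le_csSup hbdd (hfne.image _) (image_mono hfcl)
end

section
/- Let u₀ > c₀ > 0, set β := arcsin(c₀/u₀) ∈ (0, π/2), and let α ∈ (0, β). Define the line ℓ := {t(cos β, sin β) : t ∈ ℝ} and the point P := u₀ cos β · (cos β, sin β). Then: (i) |P − (u₀, 0)| = c₀ and (P − (u₀, 0))·(cos β, sin β) = 0, so ℓ is tangent at P to the circle with center (u₀, 0) and radius c₀; (ii) with c₁, u₁, v₁ given by the shock-polar formulas, one has c₁ > 0, v₁ = u₁ tan α, ((u₁, v₁) − P)·(cos β, sin β) = 0, and |(u₁, v₁) − P| = c₁; hence ℓ is tangent at the same point P to the circle with center (u₁, v₁) and radius c₁. -/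
open Real

/-- Shock polar geometry for a Chaplygin gas: the shock line
`ℓ = {t(cos β, sin β)}` with `β = arcsin(c₀/u₀)` is tangent at
`P = u₀ cos β (cos β, sin β)` to the circle of center `(u₀,0)` and radius `c₀`, and,
with the downstream state `(c₁, u₁, v₁)` given by the shock-polar formulas, `c₁ > 0`,
`v₁ = u₁ tan α`, and `ℓ` is also tangent at the same point `P` to the circle of
center `(u₁,v₁)` and radius `c₁`. -/
theorem chaplygin_shock_polar_tangency
    (u0 c0 α β c1 u1 v1 : ℝ)
    (hc0 : 0 < c0) (hu0 : c0 < u0)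
    (hβ : β = Real.arcsin (c0 / u0))
    (hα0 : 0 < α) (hαβ : α < β)
    (hc1 : c1 = Real.sqrt (u0 ^ 2 - c0 ^ 2) *
        (c0 - Real.tan α * Real.sqrt (u0 ^ 2 - c0 ^ 2)) /
        (c0 * Real.tan α + Real.sqrt (u0 ^ 2 - c0 ^ 2)))
    (hu1 : u1 = u0 * Real.sqrt (u0 ^ 2 - c0 ^ 2) /
        (Real.sqrt (u0 ^ 2 - c0 ^ 2) + c0 * Real.tan α))
    (hv1 : v1 = u0 * Real.tan α * Real.sqrt (u0 ^ 2 - c0 ^ 2) /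
        (Real.sqrt (u0 ^ 2 - c0 ^ 2) + c0 * Real.tan α))
    (P : ℝ × ℝ)
    (hP : P = (u0 * Real.cos β * Real.cos β, u0 * Real.cos β * Real.sin β)) :
    (0 < β ∧ β < π / 2) ∧
    -- (i) `ℓ` is tangent at `P` to the circle with center `(u₀,0)` and radius `c₀`
    Real.sqrt ((P.1 - u0) ^ 2 + P.2 ^ 2) = c0 ∧
    (P.1 - u0) * Real.cos β + P.2 * Real.sin β = 0 ∧
    -- (ii) the downstream circle is tangent to `ℓ` at the same point `P`
    0 < c1 ∧
    v1 = u1 * Real.tan α ∧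
    (u1 - P.1) * Real.cos β + (v1 - P.2) * Real.sin β = 0 ∧
    Real.sqrt ((u1 - P.1) ^ 2 + (v1 - P.2) ^ 2) = c1 := by
  have hu : 0 < u0 := hc0.trans hu0
  have hx0 : 0 < c0 / u0 := div_pos hc0 hu
  have hx1 : c0 / u0 < 1 := (div_lt_one hu).2 hu0
  have hβ0 : 0 < β := hα0.trans hαβ
  have hβ1 : β < π / 2 := by rw [hβ]; exact Real.arcsin_lt_pi_div_two.2 hx1
  have hs : Real.sin β = c0 / u0 := by
    rw [hβ]; exact Real.sin_arcsin (by linarith) hx1.le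
  have hc : c0 = u0 * Real.sin β := by rw [hs]; field_simp
  have hk : 0 < Real.cos β := Real.cos_pos_of_mem_Ioo ⟨by linarith, hβ1⟩
  have hs0 : 0 < Real.sin β := by rw [hs]; exact hx0
  have hsq : Real.sqrt (u0 ^ 2 - c0 ^ 2) = u0 * Real.cos β := by
    rw [show u0 ^ 2 - c0 ^ 2 = (u0 * Real.cos β) ^ 2 by
      rw [hc, mul_pow, mul_pow, Real.cos_sq']; ring]
    exact Real.sqrt_sq (by positivity)
  have ht0 : 0 < Real.tan α := Real.tan_pos_of_pos_of_lt_pi_div_two hα0 (by linarith)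
  have htl : Real.tan α < Real.tan β :=
    Real.tan_lt_tan_of_lt_of_lt_pi_div_two (by linarith) hβ1 hαβ
  rw [Real.tan_eq_sin_div_cos β, lt_div_iff₀ hk] at htl
  have hp := Real.sin_sq_add_cos_sq β
  rw [hsq] at hc1 hu1 hv1
  generalize Real.sin β = s at *
  generalize Real.cos β = k at *
  generalize Real.tan α = t at *
  clear hs hβ hsq hx0 hx1
  subst hc hP
  have hD : 0 < k + s * t := by positivity
  have hc1' : c1 = u0 * k * (s - t * k) / (k + s * t) := by
    rw [hc1, div_eq_div_iff (by positivity) hD.ne']; ring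
  have hu1' : u1 = u0 * k / (k + s * t) := by
    rw [hu1, div_eq_div_iff (by positivity) hD.ne']; ring
  have hv1' : v1 = u0 * k * t / (k + s * t) := by
    rw [hv1, div_eq_div_iff (by positivity) hD.ne']; ring
  have hcp : 0 < c1 := by
    rw [hc1']
    exact div_pos (mul_pos (by positivity) (by linarith)) hD
  have h1 : u1 - u0 * k * k = c1 * s := by
    rw [hc1', hu1']; field_simp; linear_combination (-1) * hp
  have h2 : v1 - u0 * k * s = - (c1 * k) := by
    rw [hc1', hv1']; field_simp; linear_combination (-t) * hp
  refine ⟨⟨hβ0, hβ1⟩, ?_, ?_, hcp, ?_, ?_, ?_⟩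
  · rw [show (u0 * k * k - u0) ^ 2 + (u0 * k * s) ^ 2 = (u0 * s) ^ 2 by
      linear_combination (u0 ^ 2 * (k ^ 2 - 1)) * hp]
    exact Real.sqrt_sq hc0.le
  · linear_combination (u0 * k) * hp
  · rw [hv1', hu1']; ring
  · simp only [h1, h2]; ring
  · simp only [h1, h2]
    rw [show (c1 * s) ^ 2 + (-(c1 * k)) ^ 2 = c1 ^ 2 by linear_combination c1 ^ 2 * hp]
    exact Real.sqrt_sq hcp.le
end

section
/- Let u₀ > c₀ > 0 and α ∈ (0, π/2) with c₀ tan α + √(u₀² − c₀²) > 0, and let c₁ := √(u₀² − c₀²) · (c₀ − tan α · √(u₀² − c₀²)) / (c₀ tan α + √(u₀² − c₀²)) be the downstream sound speed of the Chaplygin shock polar. Then c₁ > 0 if and only if u₀ sin α < c₀. Thus the no-concentration condition c₀ < u₀ < c₀ / sin α is exactly the condition on a supersonic oncoming flow under which the downstream sound speed behind the oblique shock is positive. -/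
open Real

/-- No-concentration criterion for the Chaplygin shock polar: for a supersonic
oncoming flow (`u₀ > c₀ > 0`) and deflection angle `α ∈ (0, π/2)`, the downstream
sound speed `c₁` is positive if and only if `u₀ sin α < c₀`, i.e. exactly under the
no-concentration condition `c₀ < u₀ < c₀/sin α`. -/
theorem chaplygin_no_concentration_iff
    (u0 c0 α c1 : ℝ)
    (hc0 : 0 < c0) (hu0 : c0 < u0)
    (hα0 : 0 < α) (hα1 : α < π / 2)
    (hden : 0 < c0 * Real.tan α + Real.sqrt (u0 ^ 2 - c0 ^ 2))
    (hc1 : c1 = Real.sqrt (u0 ^ 2 - c0 ^ 2) *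
        (c0 - Real.tan α * Real.sqrt (u0 ^ 2 - c0 ^ 2)) /
        (c0 * Real.tan α + Real.sqrt (u0 ^ 2 - c0 ^ 2))) :
    0 < c1 ↔ u0 * Real.sin α < c0 := by
  have hS : 0 < Real.sqrt (u0 ^ 2 - c0 ^ 2) := Real.sqrt_pos.mpr (by nlinarith)
  have hSq : Real.sqrt (u0 ^ 2 - c0 ^ 2) ^ 2 = u0 ^ 2 - c0 ^ 2 :=
    Real.sq_sqrt (by nlinarith)
  have hcos : 0 < Real.cos α := Real.cos_pos_of_mem_Ioo ⟨by linarith [Real.pi_pos], hα1⟩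
  have hsin : 0 < Real.sin α := Real.sin_pos_of_pos_of_lt_pi hα0 (by linarith [Real.pi_pos])
  have hsc := Real.sin_sq_add_cos_sq α
  rw [hc1, div_pos_iff_of_pos_right hden, mul_pos_iff_of_pos_left hS, sub_pos,
    Real.tan_eq_sin_div_cos, div_mul_eq_mul_div, div_lt_iff₀ hcos]
  clear hc1 hden
  generalize Real.sqrt (u0 ^ 2 - c0 ^ 2) = S at *
  have hu : 0 < u0 := hc0.trans hu0
  rw [← sq_lt_sq₀ (by positivity) (by positivity),
    ← sq_lt_sq₀ (a := u0 * Real.sin α) (by positivity) hc0.le]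
  have key : (c0 * Real.cos α) ^ 2 - (Real.sin α * S) ^ 2 = c0 ^ 2 - (u0 * Real.sin α) ^ 2 := by
    rw [mul_pow, mul_pow, hSq]
    linear_combination c0 ^ 2 * hsc
  constructor <;> intro h <;> linarith
end

section
/- Let Ω_D ⊂ ℝ² be open and bounded, and let K ⊂ Ω_D be compact. Then there exists δ > 0, depending only on K and Ω_D, such that for every ε ∈ (0,1] and every ξ₀ ∈ K there exists η ∈ ℝ³ with w^η(ξ) < 1 + ε for every ξ ∈ ∂Ω_D and w^η(ξ₀) ≥ 1 + ε + δ. (In particular, the sub-solution barrier w⁻ := sup{w^η : η ∈ ℝ³, w^η < 1 + ε on ∂Ω_D} satisfies w⁻ ≥ 1 + ε + δ on K, with δ independent of ε.) -/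
open Real Set

/-- Interior sub-solution barrier (inequality (3.32)): for an open bounded `Ω_D` and
a compact `K ⊂ Ω_D` there is `δ > 0`, depending only on `K` and `Ω_D`, such that for
every `ε ∈ (0,1]` and every `ξ₀ ∈ K` there is `η ∈ ℝ³` with
`w^η = (η₁ξ₁+η₂ξ₂+η₃)/√(1+|ξ|²) < 1+ε` on `∂Ω_D` and `w^η(ξ₀) ≥ 1+ε+δ`. -/
theorem interior_subsolution_barrier
    (ΩD : Set (ℝ × ℝ)) (hΩo : IsOpen ΩD) (hΩb : Bornology.IsBounded ΩD)
    (K : Set (ℝ × ℝ)) (hK : IsCompact K) (hKΩ : K ⊆ ΩD) :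
    ∃ δ : ℝ, 0 < δ ∧
      ∀ ε : ℝ, 0 < ε → ε ≤ 1 →
      ∀ ξ0 ∈ K, ∃ η1 η2 η3 : ℝ,
        (∀ ξ ∈ frontier ΩD,
          (η1 * ξ.1 + η2 * ξ.2 + η3) / Real.sqrt (1 + ξ.1 ^ 2 + ξ.2 ^ 2) < 1 + ε) ∧
        1 + ε + δ ≤
          (η1 * ξ0.1 + η2 * ξ0.2 + η3) / Real.sqrt (1 + ξ0.1 ^ 2 + ξ0.2 ^ 2) := by
  set f : (ℝ × ℝ) × (ℝ × ℝ) → ℝ := fun p =>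
    (p.1.1 * p.2.1 + p.1.2 * p.2.2 + 1) /
      (Real.sqrt (1 + p.1.1 ^ 2 + p.1.2 ^ 2) * Real.sqrt (1 + p.2.1 ^ 2 + p.2.2 ^ 2)) with hf
  have hpos : ∀ a b : ℝ, 0 < Real.sqrt (1 + a ^ 2 + b ^ 2) := fun a b =>
    Real.sqrt_pos.2 (by positivity)
  have hcont : Continuous f := by
    refine Continuous.div (by fun_prop) (by fun_prop) ?_
    intro p
    exact (mul_pos (hpos _ _) (hpos _ _)).ne'
  have hlt : ∀ p ∈ K ×ˢ frontier ΩD, f p < 1 := by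
    rintro ⟨⟨a, b⟩, ⟨x, y⟩⟩ ⟨h1, h2⟩
    have hne : ((a, b) : ℝ × ℝ) ≠ (x, y) := by
      intro h
      rw [hΩo.frontier_eq] at h2
      apply h2.2
      have := hKΩ h1
      simp only at this ⊢
      rwa [← h]
    simp only [hf]
    rw [div_lt_one (mul_pos (hpos _ _) (hpos _ _)), ← Real.sqrt_mul (by positivity)]
    apply Real.lt_sqrt_of_sq_lt
    have : 0 < (a - x) ^ 2 + (b - y) ^ 2 := by
      by_contra hc
      apply hne
      have h3 : a - x = 0 := by nlinarith [sq_nonneg (a - x), sq_nonneg (b - y)]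
      have h4 : b - y = 0 := by nlinarith [sq_nonneg (a - x), sq_nonneg (b - y)]
      ext
      · simp; linarith
      · simp; linarith
    nlinarith [sq_nonneg (a * y - b * x)]
  have hcomp : IsCompact (K ×ˢ frontier ΩD) := by
    refine hK.prod ?_
    exact Metric.isCompact_of_isClosed_isBounded isClosed_frontier
      (hΩb.closure.subset frontier_subset_closure)
  obtain ⟨c, hc1, hc⟩ : ∃ c < 1, ∀ p ∈ K ×ˢ frontier ΩD, f p ≤ c := by
    rcases (K ×ˢ frontier ΩD).eq_empty_or_nonempty with h | h
    · exact ⟨0, one_pos, by simp [h]⟩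
    · obtain ⟨p, hp, hm⟩ := hcomp.exists_isMaxOn h hcont.continuousOn
      exact ⟨f p, hlt p hp, fun q hq => hm hq⟩
  refine ⟨1 - c, by linarith, ?_⟩
  intro ε hε _ ξ0 hξ0
  set N := Real.sqrt (1 + ξ0.1 ^ 2 + ξ0.2 ^ 2) with hN
  have hNp : 0 < N := hpos _ _
  have hNsq : N * N = 1 + ξ0.1 ^ 2 + ξ0.2 ^ 2 := Real.mul_self_sqrt (by positivity)
  refine ⟨(1 + ε + (1 - c)) * ξ0.1 / N, (1 + ε + (1 - c)) * ξ0.2 / N,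
    (1 + ε + (1 - c)) / N, ?_, ?_⟩
  · intro ξ hξ
    have h := hc (ξ0, ξ) ⟨hξ0, hξ⟩
    have hM := hpos ξ.1 ξ.2
    have heq : ((1 + ε + (1 - c)) * ξ0.1 / N * ξ.1 + (1 + ε + (1 - c)) * ξ0.2 / N * ξ.2 +
        (1 + ε + (1 - c)) / N) / Real.sqrt (1 + ξ.1 ^ 2 + ξ.2 ^ 2)
        = (1 + ε + (1 - c)) * f (ξ0, ξ) := by
      simp only [hf, ← hN]
      field_simp
    rw [heq]
    nlinarith
  · apply le_of_eq
    rw [eq_div_iff hNp.ne']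
    field_simp
    rw [pow_two, hNsq]
    ring
end
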